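/- Let C be any one of the following families of permutations: Av({123}), Av({132}), Av({1423,4123}), Av({1234,2134}), Av({1324,3124}), Av({2314,3214}), Av({2413,4213}), Av({3412,4312}), the family of permutations avoiding 213 such that every descent position i admits some j < i with σ(i+1) < σ(j) < σ(i), or the family of permutations avoiding 213 such that every descent position i admits an odd number of indices j < i with σ(i+1) < σ(j) < σ(i). For each n ≥ 1, let σ_n be a uniform random permutation in the (nonempty) set C^n of permutations of size n in C. Then there exist constants Λ_π ∈ [0,1], one for each permutation π, such that for every permutation π, c-occ(π, σ_n)/n converges in probability, as n → ∞, to Λ_π. -/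

import Mathlib

open scoped Classical

/-- An occurrence of the pattern `π` in the permutation `σ`: a strictly increasing choice of
indices on which `σ` is in the same relative order as `π`. -/
def IsOcc {k n : ℕ} (π : Equiv.Perm (Fin k)) (σ : Equiv.Perm (Fin n)) : Prop :=
  ∃ f : Fin k → Fin n, StrictMono f ∧ ∀ a b : Fin k, σ (f a) < σ (f b) ↔ π a < π b

/-- A consecutive occurrence of the pattern `π` in the permutation `σ` at (0-based)
position `m`. -/
def IsConsecOccAt {k n : ℕ} (π : Equiv.Perm (Fin k)) (σ : Equiv.Perm (Fin n)) (m : ℕ) : Prop :=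
  ∃ hm : m + k ≤ n, ∀ a b : Fin k,
    (σ ⟨m + (a : ℕ), by have := a.isLt; omega⟩ < σ ⟨m + (b : ℕ), by have := b.isLt; omega⟩
      ↔ π a < π b)

/-- The number of consecutive occurrences of the pattern `π` in the permutation `σ`. -/
noncomputable def cOcc {k n : ℕ} (π : Equiv.Perm (Fin k)) (σ : Equiv.Perm (Fin n)) : ℕ :=
  ((Finset.range (n + 1)).filter fun m => IsConsecOccAt π σ m).card

/-- The set of permutations of size `n` avoiding every pattern in `B`. -/
noncomputable def avoidSet (n : ℕ) {k : ℕ} (B : Finset (Equiv.Perm (Fin k))) :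
    Finset (Equiv.Perm (Fin n)) :=
  Finset.univ.filter fun σ => ∀ π ∈ B, ¬ IsOcc π σ

/-- The pattern 123. -/
noncomputable def p123 : Equiv.Perm (Fin 3) := Equiv.ofBijective ![0, 1, 2] (by decide)
/-- The pattern 132. -/
noncomputable def p132 : Equiv.Perm (Fin 3) := Equiv.ofBijective ![0, 2, 1] (by decide)
/-- The pattern 213. -/
noncomputable def p213 : Equiv.Perm (Fin 3) := Equiv.ofBijective ![1, 0, 2] (by decide)
/-- The pattern 1423. -/
noncomputable def p1423 : Equiv.Perm (Fin 4) := Equiv.ofBijective ![0, 3, 1, 2] (by decide)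
/-- The pattern 4123. -/
noncomputable def p4123 : Equiv.Perm (Fin 4) := Equiv.ofBijective ![3, 0, 1, 2] (by decide)
/-- The pattern 1234. -/
noncomputable def p1234 : Equiv.Perm (Fin 4) := Equiv.ofBijective ![0, 1, 2, 3] (by decide)
/-- The pattern 2134. -/
noncomputable def p2134 : Equiv.Perm (Fin 4) := Equiv.ofBijective ![1, 0, 2, 3] (by decide)
/-- The pattern 1324. -/
noncomputable def p1324 : Equiv.Perm (Fin 4) := Equiv.ofBijective ![0, 2, 1, 3] (by decide)
/-- The pattern 3124. -/
noncomputable def p3124 : Equiv.Perm (Fin 4) := Equiv.ofBijective ![2, 0, 1, 3] (by decide)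
/-- The pattern 2314. -/
noncomputable def p2314 : Equiv.Perm (Fin 4) := Equiv.ofBijective ![1, 2, 0, 3] (by decide)
/-- The pattern 3214. -/
noncomputable def p3214 : Equiv.Perm (Fin 4) := Equiv.ofBijective ![2, 1, 0, 3] (by decide)
/-- The pattern 2413. -/
noncomputable def p2413 : Equiv.Perm (Fin 4) := Equiv.ofBijective ![1, 3, 0, 2] (by decide)
/-- The pattern 4213. -/
noncomputable def p4213 : Equiv.Perm (Fin 4) := Equiv.ofBijective ![3, 1, 0, 2] (by decide)
/-- The pattern 3412. -/
noncomputable def p3412 : Equiv.Perm (Fin 4) := Equiv.ofBijective ![2, 3, 0, 1] (by decide)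
/-- The pattern 4312. -/
noncomputable def p4312 : Equiv.Perm (Fin 4) := Equiv.ofBijective ![3, 2, 0, 1] (by decide)

/-- The family of permutations (of every size) avoiding all patterns in `B`. -/
def AvPred {k : ℕ} (B : Finset (Equiv.Perm (Fin k))) : ∀ n, Equiv.Perm (Fin n) → Prop :=
  fun _ σ => ∀ π ∈ B, ¬ IsOcc π σ

/-- Every descent of `σ` is part of an occurrence of 2-31. -/
def DescentCondA {n : ℕ} (σ : Equiv.Perm (Fin n)) : Prop :=
  ∀ (i : ℕ) (hi : i + 1 < n), σ ⟨i + 1, hi⟩ < σ ⟨i, by omega⟩ →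
    ∃ j : Fin n, (j : ℕ) < i ∧ σ ⟨i + 1, hi⟩ < σ j ∧ σ j < σ ⟨i, by omega⟩

/-- Every descent of `σ` is part of an odd number of occurrences of 2-31. -/
def DescentCondB {n : ℕ} (σ : Equiv.Perm (Fin n)) : Prop :=
  ∀ (i : ℕ) (hi : i + 1 < n), σ ⟨i + 1, hi⟩ < σ ⟨i, by omega⟩ →
    Odd ((Finset.univ.filter fun j : Fin n =>
      (j : ℕ) < i ∧ σ ⟨i + 1, hi⟩ < σ j ∧ σ j < σ ⟨i, by omega⟩).card)

/-- The family of {213, 2̄-31}-avoiding permutations. -/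
def FamAPred : ∀ n, Equiv.Perm (Fin n) → Prop :=
  fun _ σ => ¬ IsOcc p213 σ ∧ DescentCondA σ

/-- The family of {213, 2̄ᵒ-31}-avoiding permutations. -/
def FamBPred : ∀ n, Equiv.Perm (Fin n) → Prop :=
  fun _ σ => ¬ IsOcc p213 σ ∧ DescentCondB σ


/-- Iterated expectation over words of length `n` (latest letter at the head). -/
noncomputable def EE (p : ℕ → ENNReal) : ℕ → (List ℕ → ENNReal) → ENNReal
  | 0, f => f []
  | n + 1, f => EE p n (fun l => ∑' a, p a * f (a :: l))

theorem EE_mono (p : ℕ → ENNReal) (n : ℕ) : ∀ (f g : List ℕ → ENNReal),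
    (∀ l, l.length = n → f l ≤ g l) → EE p n f ≤ EE p n g := by
  induction n with
  | zero => intro f g h; exact h [] rfl
  | succ n ih =>
    intro f g h
    apply ih
    intro l hl
    refine ENNReal.tsum_le_tsum fun a => ?_
    gcongr
    exact h _ (by simp [hl])

theorem EE_congr (p : ℕ → ENNReal) (n : ℕ) (f g : List ℕ → ENNReal)
    (h : ∀ l, l.length = n → f l = g l) : EE p n f = EE p n g :=
  le_antisymm (EE_mono p n f g fun l hl => (h l hl).le) (EE_mono p n g f fun l hl => (h l hl).ge)

theorem EE_mul (p : ℕ → ENNReal) (c : ENNReal) (n : ℕ) : ∀ (f : List ℕ → ENNReal),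
    EE p n (fun l => c * f l) = c * EE p n f := by
  induction n with
  | zero => intro f; rfl
  | succ n ih =>
    intro f
    simp only [EE]
    rw [← ih]
    congr 1
    funext l
    rw [← ENNReal.tsum_mul_left]
    congr 1
    funext a
    ring

theorem EE_add (p : ℕ → ENNReal) (n : ℕ) : ∀ (f g : List ℕ → ENNReal),
    EE p n (fun l => f l + g l) = EE p n f + EE p n g := by
  induction n with
  | zero => intro f g; rfl
  | succ n ih =>
    intro f g
    simp only [EE]
    rw [← ih]
    congr 1
    funext l
    rw [← ENNReal.tsum_add]
    congr 1
    funext a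
    ring

theorem EE_one (p : ℕ → ENNReal) (hp : ∑' a, p a = 1) (n : ℕ) : EE p n (fun _ => 1) = 1 := by
  induction n with
  | zero => rfl
  | succ n ih => simp only [EE, mul_one, hp, ih]

theorem EE_const (p : ℕ → ENNReal) (hp : ∑' a, p a = 1) (n : ℕ) (c : ENNReal) :
    EE p n (fun _ => c) = c := by
  have := EE_mul p c n (fun _ => 1)
  simpa [EE_one p hp] using this

theorem EE_sum (p : ℕ → ENNReal) (n : ℕ) {ι : Type*} (s : Finset ι) (f : ι → List ℕ → ENNReal) :
    EE p n (fun l => ∑ i ∈ s, f i l) = ∑ i ∈ s, EE p n (f i) := by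
  induction s using Finset.induction_on with
  | empty =>
    simp only [Finset.sum_empty]
    have := EE_mul p 0 n (fun _ => 0)
    simpa using this
  | insert a s ha ih =>
    simp only [Finset.sum_insert ha]
    rw [EE_add, ih]

theorem EE_split (p : ℕ → ENNReal) (n m : ℕ) : ∀ (f : List ℕ → ENNReal),
    EE p (n + m) f = EE p n (fun l => EE p m (fun w => f (w ++ l))) := by
  induction m with
  | zero => intro f; rfl
  | succ m ih =>
    intro f
    show EE p (n + m) _ = _
    rw [ih]
    rfl

theorem EE_drop (p : ℕ → ENNReal) (hp : ∑' a, p a = 1) (n r : ℕ) (f : List ℕ → ENNReal) :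
    EE p (n + r) (fun l => f (l.drop r)) = EE p n f := by
  rw [EE_split]
  congr 1
  funext l
  rw [EE_congr p r _ (fun _ => f l) (fun w hw => by rw [← hw, List.drop_left]), EE_const p hp]

theorem sum_prob_le_EE (p : ℕ → ENNReal) (n : ℕ) : ∀ (f : List ℕ → ENNReal) (T : Finset (List ℕ)),
    (∀ l ∈ T, l.length = n) → ∑ l ∈ T, (l.map p).prod * f l ≤ EE p n f := by
  induction n with
  | zero =>
    intro f T hT
    have : T ⊆ {[]} := by
      intro l hl
      simpa using hT l hl
    calc _ ≤ ∑ l ∈ ({[]} : Finset (List ℕ)), (l.map p).prod * f l :=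
          Finset.sum_le_sum_of_subset this
      _ = _ := by simp [EE]
  | succ n ih =>
    intro f T hT
    have h1 := ih (fun l => ∑' a, p a * f (a :: l)) (T.image List.tail) (by
      intro l hl
      obtain ⟨l', hl', rfl⟩ := Finset.mem_image.1 hl
      have := hT l' hl'
      simp [this])
    refine le_trans ?_ h1
    rw [← Finset.sum_fiberwise_of_maps_to (s := T) (t := T.image List.tail) (g := List.tail)
      (fun l hl => Finset.mem_image_of_mem _ hl)]
    refine Finset.sum_le_sum fun l hl => ?_
    have h2 : ∀ l' ∈ T.filter (fun i => i.tail = l), l' = l'.headI :: l := by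
      intro l' h'
      rw [Finset.mem_filter] at h'
      have h3 := hT l' h'.1
      cases l' with
      | nil => simp at h3
      | cons a t => simp at h'; simp [h'.2]
    calc ∑ l' ∈ T.filter (fun i => i.tail = l), (l'.map p).prod * f l'
        = ∑ l' ∈ T.filter (fun i => i.tail = l),
            (l.map p).prod * (p l'.headI * f (l'.headI :: l)) := by
          refine Finset.sum_congr rfl fun l' h' => ?_
          conv_lhs => rw [h2 l' h']
          simp only [List.map_cons, List.prod_cons]
          ring
      _ = (l.map p).prod * ∑ a ∈ (T.filter (fun i => i.tail = l)).image List.headI,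
            (p a * f (a :: l)) := by
          rw [← Finset.mul_sum, Finset.sum_image]
          intro x hx y hy hxy
          rw [h2 x hx, h2 y hy, hxy]
      _ ≤ _ := by
          gcongr
          exact ENNReal.sum_le_tsum _

/-- Number of disjoint consecutive blocks of length `b` of `l` lying in `A`. -/
noncomputable def c0 (b : ℕ) (A : List ℕ → Prop) (l : List ℕ) : ℕ :=
  ∑ q ∈ Finset.range (l.length / b), if A ((l.drop (q * b)).take b) then 1 else 0

/-- Number of windows of length `b` of `l` lying in `A`. -/
noncomputable def cw (b : ℕ) (A : List ℕ → Prop) (l : List ℕ) : ℕ :=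
  ((Finset.range (l.length + 1)).filter fun j => j + b ≤ l.length ∧ A ((l.drop j).take b)).card

theorem c0_append (b : ℕ) (hb : 0 < b) (A : List ℕ → Prop) (w l : List ℕ) (hw : w.length = b) :
    c0 b A (w ++ l) = (if A w then 1 else 0) + c0 b A l := by
  unfold c0
  have : (w ++ l).length / b = l.length / b + 1 := by
    rw [List.length_append, hw, Nat.add_comm, Nat.add_div_right _ hb]
  rw [this, Finset.sum_range_succ', add_comm]
  congr 1
  · simp [← hw]
  · refine Finset.sum_congr rfl fun q _ => ?_
    have : (w ++ l).drop ((q + 1) * b) = l.drop (q * b) := by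
      rw [show (q + 1) * b = w.length + q * b by rw [hw]; ring, List.drop_append]
      simp
    rw [this]

theorem cw_le_sum_c0 (b : ℕ) (hb : 0 < b) (A : List ℕ → Prop) (l : List ℕ) :
    cw b A l ≤ ∑ r ∈ Finset.range b, c0 b A (l.drop r) := by
  have h1 : ∀ r, c0 b A (l.drop r) = ((Finset.range ((l.drop r).length / b)).filter
      fun q => A (((l.drop r).drop (q * b)).take b)).card := by
    intro r
    rw [c0, Finset.card_filter]
  simp only [h1]
  rw [← Finset.card_sigma]
  unfold cw
  refine Finset.card_le_card_of_injOn (fun j => (⟨j % b, j / b⟩ : Sigma fun _ : ℕ => ℕ)) ?_ ?_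
  · intro j hj
    simp only [Finset.coe_filter, Finset.mem_range, Set.mem_ofPred_eq] at hj
    simp only [Finset.coe_sigma, Set.mem_sigma_iff, Finset.coe_range, Set.mem_Iio,
      Finset.coe_filter, Finset.mem_range, Set.mem_ofPred_eq, List.drop_drop, List.length_drop]
    have e : j % b + j / b * b = j := by rw [mul_comm]; exact Nat.mod_add_div j b
    refine ⟨Nat.mod_lt _ hb, ?_, ?_⟩
    · rw [Nat.lt_iff_add_one_le, Nat.le_div_iff_mul_le hb]
      have : (j / b + 1) * b = j / b * b + b := by ring
      omega
    · rw [e]; exact hj.2.2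
  · intro x _ y _ hxy
    simp only [Sigma.mk.injEq, heq_eq_eq] at hxy
    rw [← Nat.mod_add_div x b, ← Nat.mod_add_div y b, hxy.1, hxy.2]


theorem EE_pow_c0' (p : ℕ → ENNReal) (hp : ∑' a, p a = 1) (b : ℕ) (hb : 0 < b) (A : List ℕ → Prop)
    (T : ENNReal) (n : ℕ) :
    EE p n (fun l => T ^ c0 b A l) = (EE p b (fun w => T ^ (if A w then 1 else 0))) ^ (n / b) := by
  induction n using Nat.strong_induction_on with
  | _ n ih =>
    by_cases h : n < b
    · rw [Nat.div_eq_of_lt h, pow_zero, EE_congr p n _ (fun _ => 1), EE_one p hp]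
      intro l hl
      simp [c0, hl, Nat.div_eq_of_lt h]
    · obtain ⟨m, rfl⟩ := Nat.exists_eq_add_of_le (not_lt.1 h)
      rw [Nat.add_comm b m, EE_split, Nat.add_div_right _ hb, pow_succ, ← ih m (by omega),
        mul_comm, ← EE_mul]
      congr 1
      funext l
      rw [mul_comm, ← EE_mul]
      refine EE_congr _ _ _ _ fun w hw => ?_
      rw [c0_append b hb A w l hw, pow_add, mul_comm]



theorem EE_ind_le_one (p : ℕ → ENNReal) (hp : ∑' a, p a = 1) (b : ℕ) (A : List ℕ → Prop) :
    EE p b (fun w => if A w then 1 else 0) ≤ 1 := by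
  refine le_trans (EE_mono _ _ _ (fun _ => 1) fun l _ => ?_) (EE_one p hp b).le
  split_ifs <;> simp

theorem EE_ind_add (p : ℕ → ENNReal) (hp : ∑' a, p a = 1) (b : ℕ) (A A' : List ℕ → Prop)
    (hA' : ∀ l, A' l ↔ ¬ A l) :
    EE p b (fun w => if A' w then 1 else 0) + EE p b (fun w => if A w then 1 else 0) = 1 := by
  rw [← EE_add]
  refine (EE_congr _ _ _ (fun _ => 1) fun l _ => ?_).trans (EE_one p hp b)
  by_cases h : A l <;> simp [h, hA']

theorem EE_chernoff (p : ℕ → ENNReal) (hp : ∑' a, p a = 1) (b : ℕ) (hb : 0 < b)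
    (A : List ℕ → Prop) (ε : ℝ) (hε : 0 < ε) :
    ∃ q : ℝ, 0 < q ∧ q < 1 ∧ ∀ n : ℕ,
      EE p n (fun l => if (n : ℝ) * ((EE p b (fun w => if A w then 1 else 0)).toReal + ε)
        ≤ (cw b A l : ℝ) then 1 else 0) ≤ ENNReal.ofReal (b * q ^ n) := by
  set a := EE p b (fun w => if A w then 1 else 0) with ha
  have ha1 : a ≤ 1 := EE_ind_le_one p hp b A
  set Λ := a.toReal with hΛ
  have hatop : a ≠ ⊤ := ne_top_of_le_ne_top (by simp) ha1
  have haΛ : a = ENNReal.ofReal Λ := (ENNReal.ofReal_toReal hatop).symm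
  have hΛ0 : 0 ≤ Λ := ENNReal.toReal_nonneg
  have hΛ1 : Λ ≤ 1 := by
    have := ENNReal.toReal_mono (by simp) ha1
    simpa using this
  set t : ℝ := min 1 (ε / 2) with ht
  have ht0 : 0 < t := lt_min one_pos (by linarith)
  have ht1 : t ≤ 1 := min_le_left _ _
  have ht2 : t ≤ ε / 2 := min_le_right _ _
  have hexp : Real.exp t ≤ 1 + t + t ^ 2 := by
    have := Real.abs_exp_sub_one_sub_id_le (x := t) (by rw [abs_of_pos ht0]; exact ht1)
    have := (abs_le.1 this).2
    linarith
  have hexp1 : 1 ≤ Real.exp t := Real.one_le_exp ht0.le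
  set c : ℝ := (Real.exp t - 1) * Λ with hc
  have hc0 : 0 ≤ c := mul_nonneg (by linarith) hΛ0
  have hlt : c < t * (Λ + ε) := by
    have h1 : c ≤ (t + t ^ 2) * Λ := by
      apply mul_le_mul_of_nonneg_right _ hΛ0
      linarith
    nlinarith
  have hbr : (0 : ℝ) < b := by exact_mod_cast hb
  set T : ENNReal := ENNReal.ofReal (Real.exp t) with hT
  have hT1 : 1 ≤ T := by
    rw [hT, ← ENNReal.ofReal_one]
    exact ENNReal.ofReal_le_ofReal hexp1
  set M := EE p b (fun w => T ^ (if A w then 1 else 0)) with hM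
  have hM1 : 1 ≤ M := by
    rw [hM, ← EE_one p hp b]
    exact EE_mono _ _ _ _ fun l _ => one_le_pow₀ hT1
  have hM2 : M ≤ ENNReal.ofReal (Real.exp c) := by
    obtain ⟨A', hA'⟩ : ∃ A' : List ℕ → Prop, ∀ l, A' l ↔ ¬ A l := ⟨_, fun l => Iff.rfl⟩
    have h1 : M = EE p b (fun w => if A' w then 1 else 0) + T * a := by
      rw [hM, ha, ← EE_mul, ← EE_add]
      refine EE_congr _ _ _ _ fun l _ => ?_
      by_cases h : A l <;> simp [h, hA']
    have h2 := EE_ind_add p hp b A A' hA'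
    rw [← ha] at h2
    set a' := EE p b (fun w => if A' w then 1 else 0) with ha'
    have ha'top : a' ≠ ⊤ := by
      intro h
      rw [h] at h2
      simp at h2
    have h3 : a' = ENNReal.ofReal (1 - Λ) := by
      have : a'.toReal + Λ = 1 := by
        rw [hΛ, ← ENNReal.toReal_add ha'top hatop, h2]; simp
      rw [← ENNReal.ofReal_toReal ha'top]
      congr 1
      linarith
    rw [h1, h3, haΛ, hT, ← ENNReal.ofReal_mul (by positivity),
      ← ENNReal.ofReal_add (by linarith) (by positivity)]
    apply ENNReal.ofReal_le_ofReal
    have := Real.add_one_le_exp c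
    rw [hc] at this ⊢
    linarith
  refine ⟨Real.exp ((c - t * (Λ + ε)) / b), Real.exp_pos _, ?_, ?_⟩
  · rw [Real.exp_lt_one_iff]
    exact div_neg_of_neg_of_pos (by linarith) hbr
  · intro n
    set D : ENNReal := ENNReal.ofReal (Real.exp (-(t * (n * (Λ + ε) / b)))) with hD
    have hpt : ∀ l : List ℕ, (if (n : ℝ) * (Λ + ε) ≤ (cw b A l : ℝ) then (1 : ENNReal) else 0) ≤
        ∑ r ∈ Finset.range b, D * T ^ c0 b A (l.drop r) := by
      intro l
      split_ifs with h
      · have h1 : (n : ℝ) * (Λ + ε) ≤ ∑ r ∈ Finset.range b, (c0 b A (l.drop r) : ℝ) := by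
          refine h.trans ?_
          exact_mod_cast cw_le_sum_c0 b hb A l
        have h2 : ∃ r ∈ Finset.range b, (n : ℝ) * (Λ + ε) / b ≤ (c0 b A (l.drop r) : ℝ) := by
          by_contra hcon
          push Not at hcon
          have h3 : ∑ r ∈ Finset.range b, (c0 b A (l.drop r) : ℝ) <
              ∑ r ∈ Finset.range b, (n : ℝ) * (Λ + ε) / b :=
            Finset.sum_lt_sum_of_nonempty (by simpa using hb.ne') hcon
          rw [Finset.sum_const, Finset.card_range, nsmul_eq_mul,
            mul_div_cancel₀ _ hbr.ne'] at h3
          linarith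
        obtain ⟨r, hr, h3⟩ := h2
        refine le_trans ?_ (Finset.single_le_sum (f := fun r => D * T ^ c0 b A (l.drop r))
          (fun _ _ => zero_le) hr)
        rw [hD, hT, ← ENNReal.ofReal_pow (by positivity), ← ENNReal.ofReal_mul (by positivity),
          ← Real.exp_nat_mul, ← Real.exp_add, ← ENNReal.ofReal_one]
        apply ENNReal.ofReal_le_ofReal
        apply Real.one_le_exp
        nlinarith
      · exact zero_le
    have hone : ∀ r, EE p n (fun l => T ^ c0 b A (l.drop r)) ≤ M ^ (n / b) := by
      intro r
      by_cases hr : r ≤ n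
      · obtain ⟨m, rfl⟩ := Nat.exists_eq_add_of_le hr
        rw [Nat.add_comm r m, EE_drop p hp m r (fun l => T ^ c0 b A l), EE_pow_c0' p hp b hb]
        exact pow_le_pow_right₀ hM1 (Nat.div_le_div_right (by omega))
      · rw [EE_congr p n _ (fun _ => 1), EE_one p hp]
        · exact one_le_pow₀ hM1
        · intro l hl
          rw [List.drop_eq_nil_of_le (by omega)]
          simp [c0]
    calc _ ≤ EE p n (fun l => ∑ r ∈ Finset.range b, D * T ^ c0 b A (l.drop r)) :=
          EE_mono _ _ _ _ fun l _ => hpt l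
      _ = ∑ r ∈ Finset.range b, D * EE p n (fun l => T ^ c0 b A (l.drop r)) := by
          rw [EE_sum]
          simp only [EE_mul]
      _ ≤ ∑ r ∈ Finset.range b, D * M ^ (n / b) := by
          gcongr with r hr
          exact hone r
      _ = b * (D * M ^ (n / b)) := by simp
      _ ≤ b * (D * (ENNReal.ofReal (Real.exp c)) ^ (n / b)) := by gcongr
      _ ≤ _ := by
          rw [hD, ← ENNReal.ofReal_pow (by positivity), ← ENNReal.ofReal_mul (by positivity),
            ← ENNReal.ofReal_natCast b, ← ENNReal.ofReal_mul (by positivity),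
            ← Real.exp_nat_mul, ← Real.exp_nat_mul, ← Real.exp_add]
          apply ENNReal.ofReal_le_ofReal
          gcongr
          have h1 : ((n / b : ℕ) : ℝ) ≤ n / b := Nat.cast_div_le
          have h2 : ((n / b : ℕ) : ℝ) * c ≤ n / b * c := mul_le_mul_of_nonneg_right h1 hc0
          have h3 : (n : ℝ) * ((c - t * (Λ + ε)) / b) = n / b * c - t * (n * (Λ + ε) / b) := by
            ring
          linarith



/-- Data of a one-dimensional label walk `k ↦ k + 1 - d a`, with geometric weights. -/
structure Walk where
  d : ℕ → ℕ
  kmin : ℕ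
  x : ℝ
  A : ℝ
  hx0 : 0 < x
  hx1 : x < 1
  hA : 0 < A
  hk : kmin ≤ 3
  sum0 : HasSum (fun a => A * x ^ d a) 1
  sum1 : HasSum (fun a => A * x ^ d a * (d a : ℝ)) 1
  sum2 : Summable (fun a => A * x ^ d a * (d a : ℝ) ^ 2)
  unb : ∀ M, ∃ a, M ≤ d a

namespace Walk

variable (w : Walk)

def ok (k a : ℕ) : Prop := w.kmin + w.d a ≤ k + 1

def nxt (k a : ℕ) : ℕ := k + 1 - w.d a

def lab (k0 : ℕ) : List ℕ → ℕ
  | [] => k0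
  | a :: l => w.nxt (lab k0 l) a

def valid (k0 : ℕ) : List ℕ → Prop
  | [] => True
  | a :: l => valid k0 l ∧ w.ok (w.lab k0 l) a

noncomputable def low (c k0 : ℕ) : List ℕ → ℕ
  | [] => 0
  | _ :: l => low c k0 l + if w.lab k0 l ≤ c then 1 else 0

noncomputable def p (a : ℕ) : ENNReal := ENNReal.ofReal (w.A * w.x ^ w.d a)

theorem p_pos (a : ℕ) : 0 < w.A * w.x ^ w.d a := mul_pos w.hA (pow_pos w.hx0 _)

theorem p_sum : ∑' a, w.p a = 1 := by
  unfold p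
  rw [← ENNReal.ofReal_tsum_of_nonneg (fun a => (w.p_pos a).le) w.sum0.summable, w.sum0.tsum_eq,
    ENNReal.ofReal_one]

theorem low_bound (c k0 : ℕ) : ∃ ρ : ℝ, 0 < ρ ∧ ρ < 1 ∧ ∀ R n : ℕ,
    EE w.p n (fun l => if w.valid k0 l ∧ R ≤ w.low c k0 l then 1 else 0) ≤
      ENNReal.ofReal (ρ ^ R) := by
  obtain ⟨a0, ha0⟩ := w.unb (c + 2)
  set ρ : ℝ := max (1 - w.A * w.x ^ w.d a0) (1 / 2) with hρ
  have hρ0 : 0 < ρ := lt_of_lt_of_le (by norm_num) (le_max_right _ _)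
  have hρ1 : ρ < 1 := max_lt (by linarith [w.p_pos a0]) (by norm_num)
  refine ⟨ρ, hρ0, hρ1, ?_⟩
  intro R n
  set r : ENNReal := ENNReal.ofReal ρ with hr
  have hr0 : r ≠ 0 := by simpa [hr] using hρ0
  have hrt : r ≠ ⊤ := ENNReal.ofReal_ne_top
  have hr1 : r ≤ 1 := by
    rw [hr, ← ENNReal.ofReal_one]
    exact ENNReal.ofReal_le_ofReal hρ1.le
  have hcancel : r * r⁻¹ = 1 := ENNReal.mul_inv_cancel hr0 hrt
  have hinv1 : 1 ≤ r⁻¹ := by simpa using hr1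
  have hlow : ∀ k ≤ c, ∑' a, (if w.ok k a then w.p a else 0) ≤ r := by
    intro k hk
    have h1 : w.p a0 + ∑' a, (if w.ok k a then w.p a else 0) ≤ 1 := by
      rw [← w.p_sum]
      have h2 : w.p a0 = ∑' a, (if a = a0 then w.p a else 0) := by simp
      rw [h2, ← ENNReal.tsum_add]
      refine ENNReal.tsum_le_tsum fun a => ?_
      by_cases h : a = a0
      · subst h
        have : ¬ w.ok k a := by unfold ok; omega
        simp [this]
      · simp only [h, if_false, zero_add]
        split_ifs <;> simp
    have h3 : ∑' a, (if w.ok k a then w.p a else 0) ≤ 1 - w.p a0 :=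
      ENNReal.le_sub_of_add_le_left ENNReal.ofReal_ne_top h1
    refine h3.trans ?_
    unfold p
    rw [← ENNReal.ofReal_one, ← ENNReal.ofReal_sub _ (w.p_pos a0).le, hr]
    exact ENNReal.ofReal_le_ofReal (le_max_left _ _)
  have hall : ∀ k, ∑' a, (if w.ok k a then w.p a else 0) ≤ 1 := by
    intro k
    rw [← w.p_sum]
    refine ENNReal.tsum_le_tsum fun a => ?_
    split_ifs <;> simp
  have key : ∀ n, EE w.p n (fun l => if w.valid k0 l then r⁻¹ ^ w.low c k0 l else 0) ≤ 1 := by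
    intro n
    induction n with
    | zero => simp [EE, valid, low]
    | succ n ih =>
      refine le_trans ?_ ih
      simp only [EE]
      refine EE_mono _ _ _ _ fun l _ => ?_
      by_cases hv : w.valid k0 l
      · simp only [valid, low, hv, true_and, if_true]
        have h1 : ∀ a, w.p a * (if w.ok (w.lab k0 l) a then
            r⁻¹ ^ (w.low c k0 l + if w.lab k0 l ≤ c then 1 else 0) else 0) =
            r⁻¹ ^ (w.low c k0 l + if w.lab k0 l ≤ c then 1 else 0) *
              (if w.ok (w.lab k0 l) a then w.p a else 0) := by
          intro a
          split_ifs <;> ring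
        simp only [h1]
        rw [ENNReal.tsum_mul_left]
        by_cases hc : w.lab k0 l ≤ c
        · simp only [hc, if_true]
          calc _ ≤ r⁻¹ ^ (w.low c k0 l + 1) * r := by gcongr; exact hlow _ hc
            _ = r⁻¹ ^ (w.low c k0 l) * (r * r⁻¹) := by ring
            _ = _ := by rw [hcancel, mul_one]
        · simp only [hc, if_false, add_zero]
          calc _ ≤ r⁻¹ ^ (w.low c k0 l) * 1 := by gcongr; exact hall _
            _ = _ := mul_one _
      · simp [valid, hv]
  calc _ ≤ EE w.p n (fun l => r ^ R * (if w.valid k0 l then r⁻¹ ^ w.low c k0 l else 0)) := by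
        refine EE_mono _ _ _ _ fun l _ => ?_
        by_cases h : w.valid k0 l ∧ R ≤ w.low c k0 l
        · simp only [h.1, h.2, and_self, if_true]
          calc (1 : ENNReal) = r ^ R * r⁻¹ ^ R := by rw [← mul_pow, hcancel, one_pow]
            _ ≤ _ := mul_le_mul' le_rfl (pow_le_pow_right₀ hinv1 h.2)
        · simp only [h, if_false]; exact zero_le
    _ = r ^ R * EE w.p n (fun l => (if w.valid k0 l then r⁻¹ ^ w.low c k0 l else 0)) :=
        EE_mul _ _ _ _
    _ ≤ r ^ R * 1 := by gcongr; exact key n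
    _ = _ := by rw [mul_one, hr, ENNReal.ofReal_pow hρ0.le]

theorem valid_sum (k0 : ℕ) (l : List ℕ) (h : w.valid k0 l) :
    (l.map w.d).sum + w.lab k0 l = k0 + l.length := by
  induction l with
  | nil => simp [lab]
  | cons a l ih =>
    have h1 := ih h.1
    have h2 := h.2
    unfold ok at h2
    by_cases hk : w.d a ≤ w.lab k0 l + 1
    · simp only [List.map_cons, List.sum_cons, lab, nxt, List.length_cons]
      omega
    · omega

theorem prob_eq (l : List ℕ) :
    (l.map w.p).prod = ENNReal.ofReal (w.A ^ l.length * w.x ^ (l.map w.d).sum) := by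
  induction l with
  | nil => simp
  | cons a l ih =>
    have := w.hA
    have := w.hx0
    simp only [List.map_cons, List.prod_cons, List.sum_cons, List.length_cons, ih, p]
    rw [← ENNReal.ofReal_mul (by positivity)]
    congr 1
    ring

/-- Exponential growth rate. -/
noncomputable def W : ℝ := 1 / (w.A * w.x)

theorem W_pos : 0 < w.W := by
  have := w.hA
  have := w.hx0
  unfold W
  positivity

theorem card_le (k0 n : ℕ) (T : Finset (List ℕ)) (hT : ∀ l ∈ T, l.length = n ∧ w.valid k0 l)
    (f : List ℕ → ENNReal) (hf : ∀ l ∈ T, 1 ≤ f l) (P : ℝ) (hP0 : 0 ≤ P)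
    (hP : EE w.p n f ≤ ENNReal.ofReal P) :
    (T.card : ℝ) ≤ (1 / w.x) ^ k0 * w.W ^ n * P := by
  have hA := w.hA
  have hx := w.hx0
  have hx1 := w.hx1
  have h1 := sum_prob_le_EE w.p n f T (fun l hl => (hT l hl).1)
  have h2 : ENNReal.ofReal (T.card * (w.A ^ n * w.x ^ (k0 + n))) ≤
      ∑ l ∈ T, (l.map w.p).prod * f l := by
    calc _ = ∑ l ∈ T, ENNReal.ofReal (w.A ^ n * w.x ^ (k0 + n)) := by
          rw [Finset.sum_const, nsmul_eq_mul, ENNReal.ofReal_mul (by positivity),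
            ENNReal.ofReal_natCast]
      _ ≤ _ := by
          refine Finset.sum_le_sum fun l hl => ?_
          calc _ ≤ (l.map w.p).prod * 1 := by
                rw [mul_one, prob_eq, (hT l hl).1]
                apply ENNReal.ofReal_le_ofReal
                gcongr ?_ * ?_
                apply pow_le_pow_of_le_one hx.le hx1.le
                have := w.valid_sum k0 l (hT l hl).2
                rw [(hT l hl).1] at this
                omega
            _ ≤ _ := by gcongr; exact hf l hl
  have h3 := (ENNReal.ofReal_le_ofReal_iff hP0).1 (h2.trans (h1.trans hP))
  have h4 : (0 : ℝ) < w.A ^ n * w.x ^ (k0 + n) := by positivity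
  have h5 : (T.card : ℝ) ≤ P / (w.A ^ n * w.x ^ (k0 + n)) := by
    rw [le_div_iff₀ h4]; exact h3
  refine h5.trans (le_of_eq ?_)
  unfold W
  rw [pow_add, one_div_pow, one_div_pow, mul_pow]
  field_simp

theorem upper (k0 b c : ℕ) (hb : 0 < b) (S S' : List ℕ → Prop) (hS' : ∀ l, S' l ↔ ¬ S l) (ε : ℝ) (hε : 0 < ε) :
    ∃ q C : ℝ, 0 < q ∧ q < 1 ∧ ∀ (n : ℕ) (T : Finset (List ℕ)),
      (∀ l ∈ T, l.length = n ∧ w.valid k0 l ∧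
        ((n : ℝ) * ((EE w.p b (fun w => if S w then 1 else 0)).toReal + ε) ≤ (cw b S l : ℝ) ∨
         (n : ℝ) * (1 - (EE w.p b (fun w => if S w then 1 else 0)).toReal + ε) ≤
            (cw b S' l : ℝ) ∨
         (n : ℝ) * ε ≤ (w.low c k0 l : ℝ))) →
      (T.card : ℝ) ≤ C * (w.W * q) ^ n := by
  obtain ⟨q1, hq10, hq11, h1⟩ := EE_chernoff w.p w.p_sum b hb S ε hε
  obtain ⟨q2, hq20, hq21, h2⟩ := EE_chernoff w.p w.p_sum b hb S' ε hε
  obtain ⟨ρ, hρ0, hρ1, h3⟩ := w.low_bound c k0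
  have hadd := EE_ind_add w.p w.p_sum b S S' hS'
  have e1 : (EE w.p b (fun w => if S' w then 1 else 0)).toReal =
      1 - (EE w.p b (fun w => if S w then 1 else 0)).toReal := by
    have t1 : EE w.p b (fun w => if S w then 1 else 0) ≠ ⊤ :=
      ne_top_of_le_ne_top (by simp) (EE_ind_le_one w.p w.p_sum b S)
    have t2 : EE w.p b (fun w => if S' w then 1 else 0) ≠ ⊤ :=
      ne_top_of_le_ne_top (by simp) (EE_ind_le_one w.p w.p_sum b S')
    have := congrArg ENNReal.toReal hadd
    rw [ENNReal.toReal_add t2 t1] at this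
    simp only [ENNReal.toReal_one] at this
    linarith
  set Λ := (EE w.p b (fun w => if S w then 1 else 0)).toReal with hΛ
  set q3 : ℝ := ρ ^ ε with hq3
  have hq30 : 0 < q3 := Real.rpow_pos_of_pos hρ0 _
  have hq31 : q3 < 1 := Real.rpow_lt_one hρ0.le hρ1 hε
  set q := max q1 (max q2 q3) with hq
  have hq0 : 0 < q := lt_max_of_lt_left hq10
  have hx := w.hx0
  refine ⟨q, (1 / w.x) ^ k0 * (2 * b + 1), hq0, max_lt hq11 (max_lt hq21 hq31), ?_⟩
  intro n T hT
  set f1 : List ℕ → ENNReal := fun l => if (n : ℝ) * (Λ + ε) ≤ (cw b S l : ℝ) then 1 else 0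
  set f2 : List ℕ → ENNReal := fun l => if (n : ℝ) * (1 - Λ + ε) ≤
    (cw b S' l : ℝ) then 1 else 0
  set f3 : List ℕ → ENNReal := fun l => if w.valid k0 l ∧ ⌈(n : ℝ) * ε⌉₊ ≤ w.low c k0 l then 1 else 0
  have hP : EE w.p n (fun l => f1 l + (f2 l + f3 l)) ≤ ENNReal.ofReal ((2 * b + 1) * q ^ n) := by
    rw [EE_add, EE_add]
    have g1 : EE w.p n f1 ≤ ENNReal.ofReal (b * q ^ n) := by
      refine (h1 n).trans (ENNReal.ofReal_le_ofReal ?_)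
      gcongr
      exact le_max_left _ _
    have g2 : EE w.p n f2 ≤ ENNReal.ofReal (b * q ^ n) := by
      have := h2 n
      rw [e1] at this
      refine this.trans (ENNReal.ofReal_le_ofReal ?_)
      gcongr
      exact (le_max_left _ _).trans (le_max_right _ _)
    have g3 : EE w.p n f3 ≤ ENNReal.ofReal (q ^ n) := by
      refine (h3 _ n).trans (ENNReal.ofReal_le_ofReal ?_)
      calc ρ ^ ⌈(n : ℝ) * ε⌉₊ ≤ q3 ^ n := by
            rw [hq3, ← Real.rpow_natCast, ← Real.rpow_mul_natCast hρ0.le]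
            apply Real.rpow_le_rpow_of_exponent_ge hρ0 hρ1.le
            rw [mul_comm]
            exact Nat.le_ceil _
        _ ≤ q ^ n := by
            gcongr
            exact (le_max_right _ _).trans (le_max_right _ _)
    calc _ ≤ ENNReal.ofReal (b * q ^ n) + (ENNReal.ofReal (b * q ^ n) + ENNReal.ofReal (q ^ n)) := by
          gcongr
      _ = _ := by
          rw [← ENNReal.ofReal_add (by positivity) (by positivity),
            ← ENNReal.ofReal_add (by positivity) (by positivity)]
          congr 1
          ring
  have := w.card_le k0 n T (fun l hl => ⟨(hT l hl).1, (hT l hl).2.1⟩) _ (by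
    intro l hl
    obtain ⟨_, hv, h | h | h⟩ := hT l hl
    · exact le_add_right (by simp [f1, h])
    · exact le_add_left (le_add_right (by simp [f2, h]))
    · refine le_add_left (le_add_left ?_)
      have : ⌈(n : ℝ) * ε⌉₊ ≤ w.low c k0 l := Nat.ceil_le.2 h
      simp only [f3]
      rw [if_pos ⟨hv, this⟩]) _ (by positivity) hP
  refine this.trans (le_of_eq ?_)
  rw [mul_pow]
  ring

theorem lower (δ : ℝ) (hδ : 0 < δ) :
    ∃ (u : ℕ → ℝ) (U : ℝ), (∀ k, 0 ≤ u k ∧ u k ≤ U) ∧ 0 < u 3 ∧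
      ∀ (k : ℕ) (B : Finset ℕ), (∀ a, w.ok k a ↔ a ∈ B) →
        w.W * (1 - δ) * u k ≤ ∑ a ∈ B, u (w.nxt k a) := by
  have hA := w.hA
  have hx := w.hx0
  have hx1 := w.hx1
  have hk := w.hk
  obtain ⟨S2, hS2⟩ := w.sum2
  -- second moment of the step
  have hV : HasSum (fun a => w.A * w.x ^ w.d a * (1 - (w.d a : ℝ)) ^ 2) (1 - 2 * 1 + S2) := by
    have := (w.sum0.sub (w.sum1.mul_left 2)).add hS2
    refine this.congr_fun ?_
    intro a
    ring
  have hE : HasSum (fun a => w.A * w.x ^ w.d a * (1 - (w.d a : ℝ))) (1 - 1) := by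
    refine (w.sum0.sub w.sum1).congr_fun ?_
    intro a
    ring
  set V := 1 - 2 * 1 + S2 with hVdef
  obtain ⟨M, hM⟩ := exists_nat_gt (max (4 : ℝ) (w.kmin + V / δ))
  have hM4 : (4 : ℝ) < M := (le_max_left _ _).trans_lt hM
  have hM4' : 4 < M := by exact_mod_cast hM4
  have hMV : w.kmin + V / δ < M := (le_max_right _ _).trans_lt hM
  have hMV' : V ≤ δ * (M - w.kmin) := by
    have : V / δ ≤ M - w.kmin := by linarith
    rw [div_le_iff₀ hδ] at this
    linarith
  set h : ℝ → ℝ := fun y => (y - w.kmin + 1) * (M - y) with hh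
  set u : ℕ → ℝ := fun k => if w.kmin ≤ k ∧ k < M then (1 / w.x) ^ k * h k else 0 with hu
  have hu0 : ∀ k, 0 ≤ u k := by
    intro k
    simp only [hu]
    split_ifs with hc
    · have h1 : (w.kmin : ℝ) ≤ k := by exact_mod_cast hc.1
      have h2 : (k : ℝ) < M := by exact_mod_cast hc.2
      have : 0 ≤ h k := mul_nonneg (by linarith) (by linarith)
      positivity
    · exact le_rfl
  have hug : ∀ k, w.kmin ≤ k → (1 / w.x) ^ k * h k ≤ u k := by
    intro k hk
    by_cases hc : k < M
    · simp only [hu, hk, hc, and_self, if_true, le_refl]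
    · refine le_trans ?_ (hu0 k)
      have h1 : (w.kmin : ℝ) ≤ k := by exact_mod_cast hk
      have h2 : (M : ℝ) ≤ k := by exact_mod_cast not_lt.1 hc
      apply mul_nonpos_of_nonneg_of_nonpos (by positivity)
      exact mul_nonpos_of_nonneg_of_nonpos (by linarith) (by linarith)
  refine ⟨u, ∑ k ∈ Finset.range M, u k, ?_, ?_, ?_⟩
  · intro k
    refine ⟨hu0 k, ?_⟩
    by_cases hc : k < M
    · exact Finset.single_le_sum (fun i _ => hu0 i) (Finset.mem_range.2 hc)
    · have : u k = 0 := by simp [hu, hc]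
      rw [this]
      exact Finset.sum_nonneg fun i _ => hu0 i
  · have : u 3 = (1 / w.x) ^ 3 * h 3 := by
      simp only [hu, hk, true_and]
      rw [if_pos (by omega)]
      norm_num
    rw [this]
    have hk' : (w.kmin : ℝ) ≤ 3 := by exact_mod_cast hk
    have : 0 < h 3 := mul_pos (by linarith) (by linarith)
    positivity
  · intro k B hB
    by_cases hc : w.kmin ≤ k ∧ k < M
    swap
    · have : u k = 0 := by simp only [hu, hc, if_false]
      rw [this, mul_zero]
      exact Finset.sum_nonneg fun i _ => hu0 _
    have h1 : (w.kmin : ℝ) ≤ k := by exact_mod_cast hc.1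
    have h2 : (k : ℝ) + 1 ≤ M := by exact_mod_cast hc.2
    have huk : u k = (1 / w.x) ^ k * h k := by simp only [hu, hc, and_self, if_true]
    have hS : HasSum (fun a => w.A * w.x ^ w.d a * h (k + 1 - w.d a)) (h k - V) := by
      have := ((w.sum0.mul_left (h k)).add
        (hE.mul_left ((M - k : ℝ) - (k - w.kmin + 1)))).sub hV
      have e : h k * 1 + ((M - k : ℝ) - (k - w.kmin + 1)) * (1 - 1) - V = h k - V := by ring
      rw [e] at this
      refine this.congr_fun ?_
      intro a
      simp only [hh]
      ring
    have hS2 : h k - V ≤ ∑ a ∈ B, w.A * w.x ^ w.d a * h (k + 1 - w.d a) := by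
      have h3 : HasSum (fun a => if a ∈ B then w.A * w.x ^ w.d a * h (k + 1 - w.d a) else 0)
          (∑ a ∈ B, if a ∈ B then w.A * w.x ^ w.d a * h (k + 1 - w.d a) else 0) :=
        hasSum_sum_of_ne_finset_zero (fun a ha => by simp [ha])
      have h4 : ∑ a ∈ B, (if a ∈ B then w.A * w.x ^ w.d a * h (k + 1 - w.d a) else 0) =
          ∑ a ∈ B, w.A * w.x ^ w.d a * h (k + 1 - w.d a) :=
        Finset.sum_congr rfl fun a ha => by simp [ha]
      rw [h4] at h3
      refine hasSum_le (fun a => ?_) hS h3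
      split_ifs with ha
      · exact le_rfl
      · have hn : ¬ w.ok k a := fun h => ha ((hB a).1 h)
        unfold ok at hn
        have hn' : (k : ℝ) + 1 + 1 ≤ w.kmin + w.d a := by
          have : k + 1 + 1 ≤ w.kmin + w.d a := by omega
          exact_mod_cast this
        apply mul_nonpos_of_nonneg_of_nonpos (by positivity)
        exact mul_nonpos_of_nonpos_of_nonneg (by linarith) (by linarith)
    have hVh : V ≤ δ * h k := by
      refine hMV'.trans ?_
      gcongr
      simp only [hh]
      nlinarith
    have hfin : (1 - δ) * h k ≤ ∑ a ∈ B, w.A * w.x ^ w.d a * h (k + 1 - w.d a) := by linarith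
    have hterm : ∀ a ∈ B, (1 / w.x) ^ k * w.W * (w.A * w.x ^ w.d a * h (k + 1 - w.d a)) ≤
        u (w.nxt k a) := by
      intro a ha
      have hok := (hB a).2 ha
      unfold ok at hok
      have hle : w.kmin ≤ w.nxt k a := by unfold nxt; omega
      refine le_trans (le_of_eq ?_) (hug _ hle)
      by_cases hd : w.d a ≤ k + 1
      · have hc1 : ((w.nxt k a : ℕ) : ℝ) = k + 1 - w.d a := by
          unfold nxt
          rw [Nat.cast_sub hd]
          push_cast
          ring
        have hc2 : k + 1 = w.nxt k a + w.d a := by unfold nxt; omega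
        have hc3 : w.x ^ (w.d a) * w.x ^ (w.nxt k a) = w.x ^ k * w.x := by
          rw [← pow_add, ← pow_succ, hc2, add_comm]
        rw [hc1]
        unfold W
        rw [one_div_pow, one_div_pow]
        field_simp
        rw [← hc3]
        ring
      · omega
    calc w.W * (1 - δ) * u k = (1 / w.x) ^ k * w.W * ((1 - δ) * h k) := by rw [huk]; ring
      _ ≤ (1 / w.x) ^ k * w.W * ∑ a ∈ B, w.A * w.x ^ w.d a * h (k + 1 - w.d a) := by
          have := w.W_pos
          gcongr
      _ = ∑ a ∈ B, (1 / w.x) ^ k * w.W * (w.A * w.x ^ w.d a * h (k + 1 - w.d a)) := by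
          rw [Finset.mul_sum]
      _ ≤ _ := Finset.sum_le_sum hterm

end Walk


/-- Comparison of the active-site ranks for the starting labels `k0` and `k0 + 1`. -/
def SRel (t k g g' : ℕ) : Prop :=
  (g' = g ∧ 1 ≤ g ∧ g ≤ t + 2) ∨ (g' = g + 1 ∧ k ≤ g + t + 2 ∧ g ≤ k)

/-- A generating-tree scheme: `dec k a` is the index of the active site used by the letter `a`
and `R k j i` says that site `i` remains active after inserting at site `j`. -/
structure Sch extends Walk where
  R : ℕ → ℕ → ℕ → Prop
  dec : ℕ → ℕ → ℕ
  hk2 : 2 ≤ kmin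
  dec_lt : ∀ k a, 2 ≤ k → toWalk.ok k a → dec k a < k
  dec_inj : ∀ k a b, 2 ≤ k → toWalk.ok k a → toWalk.ok k b → dec k a = dec k b → a = b
  cnt : ∀ k a, 2 ≤ k → toWalk.ok k a → Nat.count (R k (dec k a)) (k + 1) = toWalk.nxt k a
  loc_start : ∀ k a, 20 ≤ k → 20 ≤ toWalk.nxt k a → SRel 1 (toWalk.nxt k a)
    (Nat.count (R k (dec k a)) (dec k a + 1))
    (Nat.count (R (k + 1) (dec (k + 1) a)) (dec (k + 1) a + 1))
  loc_step : ∀ t k a g g', 2 * t + 20 ≤ k → 2 * t + 20 ≤ toWalk.nxt k a → SRel t k g g' →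
    (g ≤ dec k a ↔ g' ≤ dec (k + 1) a) ∧
    SRel (t + 1) (toWalk.nxt k a)
      (Nat.count (R k (dec k a)) (if g ≤ dec k a then g else g + 1))
      (Nat.count (R (k + 1) (dec (k + 1) a)) (if g' ≤ dec (k + 1) a then g' else g' + 1))

namespace Sch

variable (s : Sch)

noncomputable def g0 (k a : ℕ) : ℕ := Nat.count (s.R k (s.dec k a)) (s.dec k a + 1)

noncomputable def G (k a g : ℕ) : ℕ :=
  Nat.count (s.R k (s.dec k a)) (if g ≤ s.dec k a then g else g + 1)

noncomputable def gf (k0 : ℕ) : List ℕ → ℕ → ℕ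
  | [], _ => 0
  | a :: l, x => if x = l.length + 1 then s.g0 (s.lab k0 l) a else s.G (s.lab k0 l) a (gf k0 l x)

def lt (k0 : ℕ) : List ℕ → ℕ → ℕ → Prop
  | [], _, _ => False
  | a :: l, x, y => if y = l.length + 1 then s.gf k0 l x ≤ s.dec (s.lab k0 l) a else lt k0 l x y

theorem lab_append (k0 : ℕ) (v l : List ℕ) : s.lab k0 (v ++ l) = s.lab (s.lab k0 l) v := by
  induction v with
  | nil => rfl
  | cons a v ih => simp only [List.cons_append, Walk.lab, ih]

theorem gf_shift (k0 : ℕ) (v l : List ℕ) (x : ℕ) (hx : 1 ≤ x) (hx' : x ≤ v.length) :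
    s.gf k0 (v ++ l) (x + l.length) = s.gf (s.lab k0 l) v x := by
  induction v with
  | nil => simp at hx'; omega
  | cons a v ih =>
    simp only [List.cons_append, gf, lab_append, List.length_append]
    simp only [List.length_cons] at hx'
    by_cases h : x = v.length + 1
    · rw [if_pos h, if_pos (by omega)]
    · rw [if_neg h, if_neg (by omega), ih (by omega)]

theorem lt_shift (k0 : ℕ) (v l : List ℕ) (x y : ℕ) (hx : 1 ≤ x) (hxy : x < y) (hy : y ≤ v.length) :
    s.lt k0 (v ++ l) (x + l.length) (y + l.length) ↔ s.lt (s.lab k0 l) v x y := by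
  induction v with
  | nil => simp at hy; omega
  | cons a v ih =>
    simp only [List.cons_append, lt, lab_append, List.length_append]
    simp only [List.length_cons] at hy
    by_cases h : y = v.length + 1
    · rw [if_pos h, if_pos (by omega), gf_shift _ _ _ _ _ hx (by omega)]
    · rw [if_neg h, if_neg (by omega), ih (by omega)]

theorem lt_pre (k0 : ℕ) (v l : List ℕ) (x y : ℕ) (hy : y ≤ l.length) :
    s.lt k0 (v ++ l) x y ↔ s.lt k0 l x y := by
  induction v with
  | nil => rfl
  | cons a v ih =>
    simp only [List.cons_append, lt, List.length_append]
    rw [if_neg (by omega), ih]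

/-- All labels along the word exceed `c`. -/
def hi (c k0 : ℕ) : List ℕ → Prop
  | [] => c < k0
  | a :: l => hi c k0 l ∧ c < s.lab k0 (a :: l)

theorem hi_lab (c k0 : ℕ) (l : List ℕ) (h : s.hi c k0 l) : c < s.lab k0 l := by
  cases l with
  | nil => exact h
  | cons a l => exact h.2

theorem lab_succ (k0 : ℕ) (l : List ℕ) (h : s.hi 0 k0 l) : s.lab (k0 + 1) l = s.lab k0 l + 1 := by
  induction l with
  | nil => rfl
  | cons a l ih =>
    have h2 := h.2
    simp only [Walk.lab, Walk.nxt] at h2 ⊢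
    rw [ih h.1]
    omega

theorem hi_mono (c c' k0 : ℕ) (l : List ℕ) (hc : c' ≤ c) (h : s.hi c k0 l) : s.hi c' k0 l := by
  induction l with
  | nil => exact lt_of_le_of_lt hc h
  | cons a l ih => exact ⟨ih h.1, lt_of_le_of_lt hc h.2⟩

theorem hi_succ (c k0 : ℕ) (l : List ℕ) (h : s.hi c k0 l) : s.hi c (k0 + 1) l := by
  induction l with
  | nil => exact Nat.lt_succ_of_lt h
  | cons a l ih =>
    refine ⟨ih h.1, ?_⟩
    rw [lab_succ _ _ _ (s.hi_mono c 0 _ _ (Nat.zero_le _) h)]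
    exact Nat.lt_succ_of_lt h.2

theorem SRel_mono (t t' k g g' : ℕ) (h : t ≤ t') (hr : SRel t k g g') : SRel t' k g g' := by
  unfold SRel at *; omega

theorem gf_loc (h k0 : ℕ) (l : List ℕ) (hl : l.length ≤ h) (hh : s.hi (2 * h + 20) k0 l) (x : ℕ)
    (hx : 1 ≤ x) (hx' : x ≤ l.length) :
    SRel l.length (s.lab k0 l) (s.gf k0 l x) (s.gf (k0 + 1) l x) := by
  induction l with
  | nil => simp at hx'; omega
  | cons a l ih =>
    have h1 := hh.1
    have h2 := hh.2
    have h3 := s.hi_lab _ _ _ h1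
    have hlab := s.lab_succ k0 l (s.hi_mono _ 0 _ _ (Nat.zero_le _) h1)
    simp only [List.length_cons] at hl hx' ⊢
    simp only [gf, Walk.lab, hlab] at h2 ⊢
    by_cases hxl : x = l.length + 1
    · rw [if_pos hxl, if_pos hxl]
      exact SRel_mono _ _ _ _ _ (by omega) (s.loc_start _ _ (by omega) (by omega))
    · rw [if_neg hxl, if_neg hxl]
      exact (s.loc_step l.length _ a _ _ (by omega) (by omega) (ih (by omega) h1 (by omega))).2

theorem lt_loc (h k0 : ℕ) (l : List ℕ) (hl : l.length ≤ h) (hh : s.hi (2 * h + 20) k0 l) (x y : ℕ)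
    (hx : 1 ≤ x) (hxy : x < y) (hy : y ≤ l.length) :
    s.lt k0 l x y ↔ s.lt (k0 + 1) l x y := by
  induction l with
  | nil => simp at hy; omega
  | cons a l ih =>
    have h1 := hh.1
    have h2 := hh.2
    have h3 := s.hi_lab _ _ _ h1
    have hlab := s.lab_succ k0 l (s.hi_mono _ 0 _ _ (Nat.zero_le _) h1)
    simp only [List.length_cons] at hl hy
    simp only [lt, Walk.lab, hlab] at h2 ⊢
    by_cases hyl : y = l.length + 1
    · rw [if_pos hyl, if_pos hyl]
      exact (s.loc_step l.length _ a _ _ (by omega) (by omega)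
        (s.gf_loc h k0 l (by omega) h1 x hx (by omega))).1
    · rw [if_neg hyl, if_neg hyl]
      exact ih (by omega) h1 (by omega)

/-- The pattern `Q` (a strict order given as a relation) is realised by the word `v`. -/
def occ (h : ℕ) (Q : ℕ → ℕ → Prop) (k0 : ℕ) (v : List ℕ) : Prop :=
  ∀ x y, x < y → y < h → (s.lt k0 v (x + 1) (y + 1) ↔ Q x y)

def ev (h : ℕ) (Q : ℕ → ℕ → Prop) (v : List ℕ) : Prop :=
  ∀ᶠ K in Filter.atTop, s.occ h Q K (v.take h)

theorem occ_loc (h : ℕ) (Q : ℕ → ℕ → Prop) (k0 : ℕ) (v : List ℕ) (hv : v.length = h)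
    (hh : s.hi (2 * h + 20) k0 v) : ∀ K, k0 ≤ K → (s.occ h Q K v ↔ s.occ h Q k0 v) ∧
      s.hi (2 * h + 20) K v := by
  intro K hK
  induction K, hK using Nat.le_induction with
  | base => exact ⟨Iff.rfl, hh⟩
  | succ K hK ih =>
    refine ⟨?_, s.hi_succ _ _ _ ih.2⟩
    rw [← ih.1]
    unfold occ
    constructor
    · intro H x y hxy hy
      rw [s.lt_loc h K v hv.le ih.2 _ _ (by omega) (by omega) (by omega), H x y hxy hy]
    · intro H x y hxy hy
      rw [← s.lt_loc h K v hv.le ih.2 _ _ (by omega) (by omega) (by omega), H x y hxy hy]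

theorem occ_ev (h : ℕ) (Q : ℕ → ℕ → Prop) (k0 : ℕ) (v : List ℕ) (hv : h ≤ v.length)
    (hh : s.hi (2 * h + 20) k0 (v.take h)) : s.ev h Q v ↔ s.occ h Q k0 (v.take h) := by
  have key := s.occ_loc h Q k0 (v.take h) (by simp [hv]) hh
  unfold ev
  constructor
  · intro H
    obtain ⟨K, hK, hK2⟩ := (H.and (Filter.eventually_ge_atTop k0)).exists
    exact (key K hK2).1.1 hK
  · intro H
    filter_upwards [Filter.eventually_ge_atTop k0] with K hK
    exact (key K hK).1.2 H

theorem low_eq (c k0 : ℕ) (l : List ℕ) :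
    ((Finset.range (l.length + 1)).filter fun i => s.lab k0 (l.drop i) ≤ c).card ≤
      s.low c k0 l + 1 := by
  have aux : ((Finset.range l.length).filter fun i => s.lab k0 (l.drop (i + 1)) ≤ c).card =
      s.low c k0 l := by
    induction l with
    | nil => rfl
    | cons a l ih =>
      simp only [List.length_cons, Walk.low, ← ih, List.drop_succ_cons]
      rw [Finset.card_filter, Finset.sum_range_succ', Finset.card_filter]
      simp
  rw [← aux, Finset.card_filter, Finset.sum_range_succ', Finset.card_filter]
  split_ifs <;> simp

theorem hi_of (c k0 : ℕ) (v : List ℕ) (H : ∀ i, i ≤ v.length → c < s.lab k0 (v.drop i)) :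
    s.hi c k0 v := by
  induction v with
  | nil => exact H 0 (by simp)
  | cons a v ih =>
    refine ⟨ih fun i hi => ?_, H 0 (by simp)⟩
    have := H (i + 1) (by simpa using hi)
    simpa using this

/-- number of window occurrences in a word -/
noncomputable def wocc (h : ℕ) (Q : ℕ → ℕ → Prop) (k0 : ℕ) (l : List ℕ) : ℕ :=
  ((Finset.range (l.length + 1)).filter fun j => j + h ≤ l.length ∧
    s.occ h Q (s.lab k0 (l.drop (j + h))) ((l.drop j).take h)).card

noncomputable def bad (h k0 : ℕ) (l : List ℕ) : Finset ℕ :=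
  (Finset.range (l.length + 1)).filter fun j => ∃ i ≤ h, j + i ≤ l.length ∧
    s.lab k0 (l.drop (j + i)) ≤ 2 * h + 20

theorem bad_card (h k0 : ℕ) (l : List ℕ) :
    (s.bad h k0 l).card ≤ (h + 1) * (s.low (2 * h + 20) k0 l + 1) := by
  have hsub : s.bad h k0 l ⊆ (Finset.range (h + 1)).biUnion fun i =>
      (((Finset.range (l.length + 1)).filter fun i => s.lab k0 (l.drop i) ≤ 2 * h + 20).image
        fun m => m - i) := by
    intro j hj
    simp only [bad, Finset.mem_filter, Finset.mem_range] at hj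
    obtain ⟨hj, i, hi, h1, h2⟩ := hj
    simp only [Finset.mem_biUnion, Finset.mem_range, Finset.mem_image, Finset.mem_filter]
    exact ⟨i, by omega, j + i, ⟨by omega, h2⟩, by omega⟩
  refine (Finset.card_le_card hsub).trans (Finset.card_biUnion_le.trans ?_)
  calc _ ≤ ∑ i ∈ Finset.range (h + 1), (s.low (2 * h + 20) k0 l + 1) :=
        Finset.sum_le_sum fun i _ => Finset.card_image_le.trans (s.low_eq _ _ _)
    _ = _ := by simp

theorem good (h : ℕ) (Q : ℕ → ℕ → Prop) (k0 : ℕ) (l : List ℕ) (j : ℕ) (hj : j + h ≤ l.length)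
    (hb : j ∉ s.bad h k0 l) : s.ev h Q ((l.drop j).take (h + 1)) ↔
      s.occ h Q (s.lab k0 (l.drop (j + h))) ((l.drop j).take h) := by
  have e : ((l.drop j).take (h + 1)).take h = (l.drop j).take h := by
    rw [List.take_take]; congr 1; omega
  have := s.occ_ev h Q (s.lab k0 (l.drop (j + h))) ((l.drop j).take (h + 1))
    (by simp; omega) (by
      rw [e]
      apply s.hi_of
      intro i hi
      have hi' : i ≤ h := by simp at hi; omega
      by_contra hc
      apply hb
      simp only [bad, Finset.mem_filter, Finset.mem_range]
      refine ⟨by omega, i, hi', by omega, ?_⟩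
      push Not at hc
      rw [← s.lab_append] at hc
      have key : (List.take h (List.drop j l)).drop i ++ l.drop (j + h) = l.drop (j + i) := by
        rw [List.drop_take, List.drop_drop]
        have h3 := List.take_append_drop (h - i) (l.drop (j + i))
        rw [List.drop_drop] at h3
        have h4 : j + i + (h - i) = j + h := by omega
        rw [h4] at h3
        exact h3
      rwa [key] at hc)
  rw [this, e]

theorem wocc_le (h : ℕ) (Q : ℕ → ℕ → Prop) (k0 : ℕ) (l : List ℕ) :
    s.wocc h Q k0 l ≤ cw (h + 1) (s.ev h Q) l + (h + 1) * (s.low (2 * h + 20) k0 l + 1) + 1 := by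
  have hsub : ((Finset.range (l.length + 1)).filter fun j => j + h ≤ l.length ∧
      s.occ h Q (s.lab k0 (l.drop (j + h))) ((l.drop j).take h)) ⊆
      ((Finset.range (l.length + 1)).filter fun j => j + (h + 1) ≤ l.length ∧
        s.ev h Q ((l.drop j).take (h + 1))) ∪ s.bad h k0 l ∪ {l.length - h} := by
    intro j hj
    simp only [Finset.mem_filter, Finset.mem_range] at hj
    simp only [Finset.mem_union, Finset.mem_filter, Finset.mem_range, Finset.mem_singleton]
    by_cases hb : j ∈ s.bad h k0 l
    · exact Or.inl (Or.inr hb)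
    by_cases hj2 : j + (h + 1) ≤ l.length
    · exact Or.inl (Or.inl ⟨hj.1, hj2, (s.good h Q k0 l j hj.2.1 hb).2 hj.2.2⟩)
    · right; omega
  refine (Finset.card_le_card hsub).trans ((Finset.card_union_le _ _).trans ?_)
  have h1 := Finset.card_union_le ((Finset.range (l.length + 1)).filter fun j =>
    j + (h + 1) ≤ l.length ∧ s.ev h Q ((l.drop j).take (h + 1))) (s.bad h k0 l)
  have h2 := s.bad_card h k0 l
  unfold cw
  simp only [Finset.card_singleton]
  omega

theorem le_wocc (h : ℕ) (Q : ℕ → ℕ → Prop) (k0 : ℕ) (l : List ℕ)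
    (S' : List ℕ → Prop) (hS' : ∀ v, S' v ↔ ¬ s.ev h Q v) :
    l.length ≤ s.wocc h Q k0 l + cw (h + 1) S' l +
      (h + 1) * (s.low (2 * h + 20) k0 l + 1) + h := by
  have hsub : Finset.range (l.length - h) ⊆
      ((Finset.range (l.length + 1)).filter fun j => j + h ≤ l.length ∧
      s.occ h Q (s.lab k0 (l.drop (j + h))) ((l.drop j).take h)) ∪
      ((Finset.range (l.length + 1)).filter fun j => j + (h + 1) ≤ l.length ∧
        S' ((l.drop j).take (h + 1))) ∪ s.bad h k0 l := by
    intro j hj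
    simp only [Finset.mem_range] at hj
    simp only [Finset.mem_union, Finset.mem_filter, Finset.mem_range]
    by_cases hb : j ∈ s.bad h k0 l
    · exact Or.inr hb
    left
    by_cases he : s.ev h Q ((l.drop j).take (h + 1))
    · exact Or.inl ⟨by omega, by omega, (s.good h Q k0 l j (by omega) hb).1 he⟩
    · exact Or.inr ⟨by omega, by omega, (hS' _).2 he⟩
  have h0 := (Finset.card_le_card hsub).trans (Finset.card_union_le _ _)
  have h1 := Finset.card_union_le ((Finset.range (l.length + 1)).filter fun j => j + h ≤ l.length ∧
      s.occ h Q (s.lab k0 (l.drop (j + h))) ((l.drop j).take h))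
      ((Finset.range (l.length + 1)).filter fun j => j + (h + 1) ≤ l.length ∧
        S' ((l.drop j).take (h + 1)))
  have h2 := s.bad_card h k0 l
  unfold cw wocc
  beta_reduce
  rw [Finset.card_range] at h0
  omega

end Sch


/-- Append a new last value `m` to the permutation `σ`. -/
def app {n : ℕ} (σ : Equiv.Perm (Fin n)) (m : Fin (n + 1)) : Equiv.Perm (Fin (n + 1)) :=
  (finSuccEquiv' (Fin.last n)).trans ((Equiv.optionCongr σ).trans (finSuccEquiv' m).symm)

theorem app_last {n : ℕ} (σ : Equiv.Perm (Fin n)) (m : Fin (n + 1)) :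
    app σ m (Fin.last n) = m := by
  simp [app]

theorem app_castSucc {n : ℕ} (σ : Equiv.Perm (Fin n)) (m : Fin (n + 1)) (i : Fin n) :
    app σ m i.castSucc = m.succAbove (σ i) := by
  have : finSuccEquiv' (Fin.last n) i.castSucc = some i := by
    rw [← Fin.succAbove_last]; simp
  simp [app, this]

theorem app_val {n : ℕ} (σ : Equiv.Perm (Fin n)) (m : Fin (n + 1)) (i : Fin n) :
    (app σ m i.castSucc : ℕ) = if (σ i : ℕ) < m then (σ i : ℕ) else (σ i : ℕ) + 1 := by
  rw [app_castSucc, Fin.succAbove]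
  simp only [Fin.lt_def, Fin.val_castSucc]
  split_ifs <;> simp

theorem app_inj {n : ℕ} {σ τ : Equiv.Perm (Fin n)} {m m' : Fin (n + 1)}
    (h : app σ m = app τ m') : σ = τ ∧ m = m' := by
  have hm : m = m' := by rw [← app_last σ m, h, app_last]
  subst hm
  refine ⟨?_, rfl⟩
  ext i
  have := congrArg (fun e => e i.castSucc) h
  simp only [app_castSucc] at this
  rw [Fin.succAbove_right_injective this]

theorem app_bij (n : ℕ) :
    Function.Bijective (fun q : Equiv.Perm (Fin n) × Fin (n + 1) => app q.1 q.2) := by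
  rw [Fintype.bijective_iff_injective_and_card]
  constructor
  · rintro ⟨σ, m⟩ ⟨τ, m'⟩ h
    obtain ⟨h1, h2⟩ := app_inj h
    exact Prod.ext h1 h2
  · simp [Fintype.card_perm, Nat.factorial_succ, mul_comm]

noncomputable def pref {n : ℕ} (σ : Equiv.Perm (Fin (n + 1))) : Equiv.Perm (Fin n) :=
  (Function.surjInv (app_bij n).2 σ).1

theorem app_pref {n : ℕ} (σ : Equiv.Perm (Fin (n + 1))) : app (pref σ) (σ (Fin.last n)) = σ := by
  have h := Function.surjInv_eq (app_bij n).2 σ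
  have h2 : (Function.surjInv (app_bij n).2 σ).2 = σ (Fin.last n) := by
    conv_rhs => rw [← h]
    rw [app_last]
  rw [← h2]; exact h

theorem pref_app {n : ℕ} (σ : Equiv.Perm (Fin n)) (m : Fin (n + 1)) : pref (app σ m) = σ :=
  (app_inj (app_pref (app σ m))).1

/-- The old site corresponding to a new site after inserting at `m`. -/
def pre (m m' : ℕ) : ℕ := if m' ≤ m then m' else m' - 1

theorem count_comp (L R : ℕ → Prop) (v : ℕ) :
    Nat.count (fun x => L x ∧ R (Nat.count L x)) v = Nat.count R (Nat.count L v) := by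
  induction v with
  | zero => simp
  | succ v ih =>
    rw [Nat.count_succ, Nat.count_succ, ih]
    by_cases h : L v
    · simp [h, Nat.count_succ]
    · simp [h]

theorem count_congr' (L R : ℕ → Prop) [DecidablePred L] [DecidablePred R] (v : ℕ) (h : ∀ x < v, L x ↔ R x) :
    Nat.count L v = Nat.count R v := by
  induction v with
  | zero => simp
  | succ v ih =>
    rw [Nat.count_succ, Nat.count_succ, ih fun x hx => h x (by omega)]
    simp [h v (by omega)]

theorem count_pre_le (S : ℕ → Prop) (m v : ℕ) (hv : v ≤ m) :
    Nat.count (fun x => S (pre m x)) v = Nat.count S v := by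
  apply count_congr'
  intro x hx
  simp [pre, show x ≤ m by omega]

theorem count_pre_gt (S : ℕ → Prop) (m v : ℕ) (hm : S m) (hv : m ≤ v) :
    Nat.count (fun x => S (pre m x)) (v + 1) = Nat.count S v + 1 := by
  induction v, hv using Nat.le_induction with
  | base => rw [Nat.count_succ, count_pre_le S m m le_rfl]; simp [pre, hm]
  | succ v hv ih =>
    rw [Nat.count_succ, ih, Nat.count_succ]
    have : pre m (v + 1) = v := by unfold pre; rw [if_neg (by omega)]; omega
    rw [this]
    omega

/-- A generating tree of permutations (growth by appending a last value), described by `s`. -/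
structure GT (s : Sch) (F : ∀ n, Equiv.Perm (Fin n) → Prop) where
  Site : ∀ n, Equiv.Perm (Fin n) → ℕ → Prop
  F1 : ∀ σ, F 1 σ
  S10 : ∀ σ, Site 1 σ 0
  S11 : ∀ σ, Site 1 σ 1
  hFp : ∀ n (σ : Equiv.Perm (Fin (n + 1))) (m : Fin (n + 2)), F (n + 2) (app σ m) → F (n + 1) σ
  hFS : ∀ n (σ : Equiv.Perm (Fin (n + 1))) (m : Fin (n + 2)), F (n + 1) σ →
    2 ≤ Nat.count (Site (n + 1) σ) (n + 2) → (F (n + 2) (app σ m) ↔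
    Site (n + 1) σ m ∧ ∃ a, s.ok (Nat.count (Site (n + 1) σ) (n + 2)) a ∧
      s.dec (Nat.count (Site (n + 1) σ) (n + 2)) a = Nat.count (Site (n + 1) σ) m)
  hS : ∀ n (σ : Equiv.Perm (Fin (n + 1))) (m : Fin (n + 2)), F (n + 2) (app σ m) →
    2 ≤ Nat.count (Site (n + 1) σ) (n + 2) → Site (n + 1) σ m →
    ∀ m' ≤ n + 2, (Site (n + 2) (app σ m) m' ↔ Site (n + 1) σ (pre m m') ∧
      s.R (Nat.count (Site (n + 1) σ) (n + 2)) (Nat.count (Site (n + 1) σ) m)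
        (Nat.count (fun x => Site (n + 1) σ (pre m x)) m'))

namespace GT

variable {s : Sch} {F : ∀ n, Equiv.Perm (Fin n) → Prop} (T : GT s F)

noncomputable def k {n : ℕ} (σ : Equiv.Perm (Fin (n + 1))) : ℕ :=
  Nat.count (T.Site (n + 1) σ) (n + 2)

noncomputable def letter {n : ℕ} (σ : Equiv.Perm (Fin (n + 1))) (m : ℕ) : ℕ :=
  if h : ∃ a, s.ok (T.k σ) a ∧ s.dec (T.k σ) a = Nat.count (T.Site (n + 1) σ) m then
    Classical.choose h else 0

noncomputable def code : ∀ n, Equiv.Perm (Fin (n + 1)) → List ℕ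
  | 0, _ => []
  | n + 1, σ => T.letter (pref σ) (σ (Fin.last (n + 1))) :: code n (pref σ)

theorem code_app (n : ℕ) (σ : Equiv.Perm (Fin (n + 1))) (m : Fin (n + 2)) :
    T.code (n + 1) (app σ m) = T.letter σ m :: T.code n σ := by
  simp only [code, pref_app, app_last]

theorem code_length (n : ℕ) (σ : Equiv.Perm (Fin (n + 1))) : (T.code n σ).length = n := by
  induction n with
  | zero => rfl
  | succ n ih => simp [code, ih]

theorem hF (n : ℕ) (σ : Equiv.Perm (Fin (n + 1))) (m : Fin (n + 2)) (hk : F (n + 1) σ → 2 ≤ T.k σ) :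
    F (n + 2) (app σ m) ↔
    F (n + 1) σ ∧ T.Site (n + 1) σ m ∧ ∃ a, s.ok (Nat.count (T.Site (n + 1) σ) (n + 2)) a ∧
      s.dec (Nat.count (T.Site (n + 1) σ) (n + 2)) a = Nat.count (T.Site (n + 1) σ) m := by
  constructor
  · intro h
    have h1 := T.hFp n σ m h
    exact ⟨h1, (T.hFS n σ m h1 (hk h1)).1 h⟩
  · rintro ⟨h1, h2⟩
    exact (T.hFS n σ m h1 (hk h1)).2 h2

theorem k_app {n : ℕ} (σ : Equiv.Perm (Fin (n + 1))) (m : Fin (n + 2)) (h : F (n + 2) (app σ m))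
    (hk : 2 ≤ T.k σ) (v : ℕ) (hv : v ≤ n + 3) :
    Nat.count (T.Site (n + 2) (app σ m)) v = Nat.count (s.R (T.k σ) (Nat.count (T.Site (n + 1) σ) m))
      (Nat.count (fun x => T.Site (n + 1) σ (pre m x)) v) := by
  rw [← count_comp]
  apply count_congr'
  intro x hx
  exact T.hS n σ m h hk ((T.hF n σ m (fun _ => hk)).1 h).2.1 x (by omega)

theorem letter_spec {n : ℕ} (σ : Equiv.Perm (Fin (n + 1))) (m : Fin (n + 2))
    (h : F (n + 2) (app σ m)) (hk : 2 ≤ T.k σ) : s.ok (T.k σ) (T.letter σ m) ∧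
      s.dec (T.k σ) (T.letter σ m) = Nat.count (T.Site (n + 1) σ) m := by
  have h' := ((T.hF n σ m (fun _ => hk)).1 h).2.2
  unfold letter
  rw [dif_pos (by exact h')]
  exact Classical.choose_spec h'

theorem lab_ge (l : List ℕ) (h : s.valid 2 l) : 2 ≤ s.lab 2 l := by
  cases l with
  | nil => exact le_rfl
  | cons a l =>
    have := h.2
    have h2 := s.hk2
    simp only [Walk.lab, Walk.nxt, Walk.ok] at *
    omega

theorem code_spec (n : ℕ) (σ : Equiv.Perm (Fin (n + 1))) (h : F (n + 1) σ) :
    s.valid 2 (T.code n σ) ∧ s.lab 2 (T.code n σ) = T.k σ ∧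
    (∀ x : Fin (n + 1), 1 ≤ (x : ℕ) → s.gf 2 (T.code n σ) x =
      Nat.count (T.Site (n + 1) σ) (σ x + 1)) ∧
    (∀ x y : Fin (n + 1), 1 ≤ (x : ℕ) → x < y → (s.lt 2 (T.code n σ) x y ↔ σ x < σ y)) := by
  induction n with
  | zero =>
    refine ⟨trivial, ?_, ?_, ?_⟩
    · have h0 := T.S10 σ
      have h1 := T.S11 σ
      simp only [code, Walk.lab, k, Nat.count_succ, Nat.count_zero]
      rw [if_pos h0, if_pos h1]
    · intro x hx; omega
    · intro x y hx; omega
  | succ n ih =>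
    obtain ⟨τ, m, rfl⟩ : ∃ τ m, σ = app τ m := ⟨_, _, (app_pref σ).symm⟩
    obtain ⟨ih1, ih2, ih3, ih4⟩ := ih τ (T.hFp n τ m h)
    have hk2 : 2 ≤ T.k τ := ih2 ▸ lab_ge _ ih1
    have hF := (T.hF n τ m (fun _ => hk2)).1 h
    obtain ⟨hl1, hl2⟩ := T.letter_spec τ m h hk2
    have hk := T.k_app τ m h hk2
    rw [T.code_app]
    have hm := m.isLt
    have hlen := T.code_length n τ
    refine ⟨⟨ih1, ih2 ▸ hl1⟩, ?_, ?_, ?_⟩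
    · simp only [Walk.lab, ih2]
      conv_rhs => unfold k
      rw [hk _ (by omega), count_pre_gt _ _ _ hF.2.1 (by omega), ← hl2]
      exact (s.cnt _ _ hk2 hl1).symm
    · intro x hx
      induction x using Fin.lastCases with
      | last =>
        simp only [Sch.gf, Fin.val_last, hlen, if_true, app_last, ih2]
        rw [hk _ (by omega), count_pre_gt _ _ _ hF.2.1 le_rfl, ← hl2]
        rfl
      | cast x =>
        have hxl := x.isLt
        simp only [Sch.gf, Fin.val_castSucc, hlen, ih2] at hx ⊢
        rw [if_neg (by omega), ih3 x hx, Sch.G, hl2]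
        have hv := (τ x).isLt
        by_cases hlt : (τ x : ℕ) < m
        · have e := app_val τ m x
          rw [if_pos hlt] at e
          rw [e, hk _ (by omega), if_pos (Nat.count_monotone _ (by omega)),
            count_pre_le _ _ _ (by omega)]
        · have e := app_val τ m x
          rw [if_neg hlt] at e
          rw [e, hk _ (by omega), count_pre_gt _ _ _ hF.2.1 (by omega), if_neg]
          have : Nat.count (T.Site (n + 1) τ) (m + 1) ≤ Nat.count (T.Site (n + 1) τ) (τ x + 1) :=
            Nat.count_monotone _ (by omega)
          rw [Nat.count_succ, if_pos hF.2.1] at this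
          omega
    · intro x y hx hxy
      induction y using Fin.lastCases with
      | last =>
        induction x using Fin.lastCases with
        | last => exact absurd hxy (lt_irrefl _)
        | cast x =>
          simp only [Sch.lt, Fin.val_castSucc, Fin.val_last, hlen, if_true, ih2] at hx ⊢
          rw [ih3 x hx, hl2, app_last, Fin.lt_def, app_val]
          by_cases hlt : (τ x : ℕ) < m
          · rw [if_pos hlt]
            exact ⟨fun _ => hlt, fun _ => Nat.count_monotone _ (by omega)⟩
          · rw [if_neg hlt]
            have : Nat.count (T.Site (n + 1) τ) (m + 1) ≤
              Nat.count (T.Site (n + 1) τ) (τ x + 1) := Nat.count_monotone _ (by omega)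
            rw [Nat.count_succ, if_pos hF.2.1] at this
            constructor <;> intro _ <;> omega
      | cast y =>
        induction x using Fin.lastCases with
        | last =>
          rw [Fin.lt_def] at hxy
          simp only [Fin.val_castSucc, Fin.val_last] at hxy
          omega
        | cast x =>
          have hyl := y.isLt
          simp only [Sch.lt, Fin.val_castSucc, hlen] at hx ⊢
          rw [if_neg (by omega), ih4 x y hx (by simpa using hxy), app_castSucc, app_castSucc,
            (Fin.strictMono_succAbove m).lt_iff_lt]

theorem k_ge (n : ℕ) (σ : Equiv.Perm (Fin (n + 1))) (h : F (n + 1) σ) : 2 ≤ T.k σ := by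
  have h1 := T.code_spec n σ h
  exact h1.2.1 ▸ lab_ge _ h1.1

theorem code_inj (n : ℕ) (σ τ : Equiv.Perm (Fin (n + 1))) (hσ : F (n + 1) σ) (hτ : F (n + 1) τ)
    (h : T.code n σ = T.code n τ) : σ = τ := by
  induction n with
  | zero =>
    ext i
    have h1 := (σ i).isLt
    have h2 := (τ i).isLt
    omega
  | succ n ih =>
    obtain ⟨σ, m, rfl⟩ : ∃ τ m, σ = app τ m := ⟨_, _, (app_pref σ).symm⟩
    obtain ⟨τ, m', rfl⟩ : ∃ τ' m, τ = app τ' m := ⟨_, _, (app_pref τ).symm⟩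
    rw [T.code_app, T.code_app, List.cons.injEq] at h
    have h1 := (T.hF n σ m (T.k_ge n σ)).1 hσ
    have h2 := (T.hF n τ m' (T.k_ge n τ)).1 hτ
    obtain rfl := ih σ τ h1.1 h2.1 h.2
    have e1 := (T.letter_spec σ m hσ (T.k_ge n σ h1.1)).2
    have e2 := (T.letter_spec σ m' hτ (T.k_ge n σ h1.1)).2
    rw [h.1] at e1
    have := Nat.count_injective h1.2.1 h2.2.1 (e1.symm.trans e2)
    rw [Fin.ext this]

theorem exists_site (S : ℕ → Prop) (n j : ℕ) (h : j < Nat.count S n) :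
    ∃ m < n, S m ∧ Nat.count S m = j := by
  induction n with
  | zero => simp at h
  | succ n ih =>
    by_cases h' : j < Nat.count S n
    · obtain ⟨m, h1, h2⟩ := ih h'
      exact ⟨m, by omega, h2⟩
    · rw [Nat.count_succ] at h
      by_cases hn : S n
      · rw [if_pos hn] at h
        exact ⟨n, by omega, hn, by omega⟩
      · rw [if_neg hn] at h; omega

theorem code_surj (n : ℕ) (l : List ℕ) (hl : l.length = n) (hv : s.valid 2 l) :
    ∃ σ : Equiv.Perm (Fin (n + 1)), F (n + 1) σ ∧ T.code n σ = l := by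
  induction n generalizing l with
  | zero =>
    refine ⟨1, T.F1 _, ?_⟩
    rw [List.length_eq_zero_iff] at hl
    rw [hl]; rfl
  | succ n ih =>
    cases l with
    | nil => simp at hl
    | cons a l =>
      obtain ⟨σ, hσ, rfl⟩ := ih l (by simpa using hl) hv.1
      have h1 := T.code_spec n σ hσ
      have hok := hv.2
      rw [h1.2.1] at hok
      have hk2 : 2 ≤ T.k σ := h1.2.1 ▸ lab_ge _ h1.1
      obtain ⟨m, hm, hS, hc⟩ := exists_site (T.Site (n + 1) σ) (n + 2) _ (s.dec_lt _ _ hk2 hok)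
      have hFm : F (n + 2) (app σ ⟨m, hm⟩) := (T.hF n σ ⟨m, hm⟩ (T.k_ge n σ)).2 ⟨hσ, hS, a, hok, hc.symm⟩
      refine ⟨app σ ⟨m, hm⟩, hFm, ?_⟩
      rw [T.code_app]
      obtain ⟨h3, h4⟩ := T.letter_spec σ ⟨m, hm⟩ hFm hk2
      rw [s.dec_inj _ _ _ hk2 h3 hok (h4.trans hc)]

end GT


namespace GT

variable {s : Sch} {F : ∀ n, Equiv.Perm (Fin n) → Prop} (T : GT s F)

def patQ {h : ℕ} (π : Equiv.Perm (Fin h)) (x y : ℕ) : Prop :=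
  ∃ (hx : x < h) (hy : y < h), π ⟨x, hx⟩ < π ⟨y, hy⟩

theorem consec_iff {h n : ℕ} (π : Equiv.Perm (Fin h)) (σ : Equiv.Perm (Fin n)) (m : ℕ)
    (hm : m + h ≤ n) : IsConsecOccAt π σ m ↔
      ∀ x y (hxy : x < y) (hy : y < h), (σ ⟨m + x, by omega⟩ < σ ⟨m + y, by omega⟩ ↔ patQ π x y) := by
  constructor
  · rintro ⟨_, H⟩ x y hxy hy
    rw [H ⟨x, by omega⟩ ⟨y, hy⟩]
    exact ⟨fun h => ⟨_, _, h⟩, fun ⟨_, _, h⟩ => h⟩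
  · intro H
    refine ⟨hm, ?_⟩
    have H' : ∀ a b : Fin h, a < b →
        (σ ⟨m + (a : ℕ), by omega⟩ < σ ⟨m + (b : ℕ), by omega⟩ ↔ π a < π b) := by
      intro a b hab
      rw [H a b hab b.isLt]
      exact ⟨fun ⟨_, _, h⟩ => h, fun h => ⟨_, _, h⟩⟩
    intro a b
    rcases lt_trichotomy a b with hab | rfl | hab
    · exact H' a b hab
    · simp
    · have h1 := H' b a hab
      have n1 : π a ≠ π b := fun h => (ne_of_gt hab) (π.injective h)
      have n2 : σ ⟨m + (a : ℕ), by omega⟩ ≠ σ ⟨m + (b : ℕ), by omega⟩ := by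
        intro h
        have := σ.injective h
        rw [Fin.mk.injEq] at this
        have : (b : ℕ) < a := hab
        omega
      rw [← not_le, ← not_le, le_iff_lt_or_eq, le_iff_lt_or_eq, h1]
      simp only [n1.symm, n2.symm, or_false]

theorem occ_iff {h n : ℕ} (π : Equiv.Perm (Fin h)) (σ : Equiv.Perm (Fin (n + 1)))
    (hσ : F (n + 1) σ) (j m : ℕ) (hm : 1 ≤ m) (hj : j + h + m = n + 1) :
    IsConsecOccAt π σ m ↔ s.occ h (patQ π) (s.lab 2 ((T.code n σ).drop (j + h)))
      (((T.code n σ).drop j).take h) := by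
  rw [consec_iff π σ m (by omega)]
  unfold Sch.occ
  have hlen := T.code_length n σ
  set l := T.code n σ with hl
  have e1 : l.take j ++ ((l.drop j).take h ++ l.drop (j + h)) = l := by
    conv_rhs => rw [← List.take_append_drop j l, ← List.take_append_drop h (l.drop j)]
    rw [List.drop_drop]
  have key : ∀ x y (hxy : x < y) (hy : y < h),
      (σ ⟨m + x, by omega⟩ < σ ⟨m + y, by omega⟩ ↔
        s.lt (s.lab 2 (l.drop (j + h))) ((l.drop j).take h) (x + 1) (y + 1)) := by
    intro x y hxy hy
    have h4 := (T.code_spec n σ hσ).2.2.2 ⟨m + x, by omega⟩ ⟨m + y, by omega⟩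
      (by simp only []; omega) (by rw [Fin.lt_def]; simp only []; omega)
    rw [← h4, ← hl]
    simp only []
    conv_lhs => rw [← e1]
    rw [s.lt_pre _ _ _ _ _ (by simp [hlen]; omega)]
    have e2 : m + x = (x + 1) + (l.drop (j + h)).length := by simp [hlen]; omega
    have e3 : m + y = (y + 1) + (l.drop (j + h)).length := by simp [hlen]; omega
    rw [e2, e3, s.lt_shift _ _ _ _ _ (by omega) (by omega) (by simp [hlen]; omega)]
  constructor
  · intro H x y hxy hy
    rw [← key x y hxy hy, H x y hxy hy]
  · intro H x y hxy hy
    rw [key x y hxy hy, H x y hxy hy]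

theorem cOcc_wocc {h n : ℕ} (π : Equiv.Perm (Fin h)) (σ : Equiv.Perm (Fin (n + 1)))
    (hσ : F (n + 1) σ) : cOcc π σ ≤ s.wocc h (patQ π) 2 (T.code n σ) + 1 ∧
      s.wocc h (patQ π) 2 (T.code n σ) ≤ cOcc π σ := by
  have hlen := T.code_length n σ
  unfold cOcc Sch.wocc
  constructor
  · have hsub : ((Finset.range (n + 1 + 1)).filter fun m => IsConsecOccAt π σ m) ⊆
        insert 0 (((Finset.range ((T.code n σ).length + 1)).filter fun j =>
          j + h ≤ (T.code n σ).length ∧ s.occ h (patQ π) (s.lab 2 ((T.code n σ).drop (j + h)))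
      (((T.code n σ).drop j).take h)).image fun j => n + 1 - h - j) := by
      intro m hm
      rw [Finset.mem_filter] at hm
      rw [Finset.mem_insert]
      by_cases h0 : m = 0
      · exact Or.inl h0
      right
      obtain ⟨hmn, _⟩ := hm.2
      rw [Finset.mem_image]
      refine ⟨n + 1 - h - m, ?_, by omega⟩
      rw [Finset.mem_filter, Finset.mem_range, hlen]
      exact ⟨by omega, by omega, (T.occ_iff π σ hσ _ m (by omega) (by omega)).1 hm.2⟩
    exact (Finset.card_le_card hsub).trans ((Finset.card_insert_le _ _).trans
      (Nat.add_le_add_right Finset.card_image_le 1))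
  · apply Finset.card_le_card_of_injOn (fun j => n + 1 - h - j)
    · intro j hj
      simp only [Finset.coe_filter, Finset.mem_range, hlen, Set.mem_ofPred_eq] at hj ⊢
      exact ⟨by omega, (T.occ_iff π σ hσ j _ (by omega) (by omega)).2 hj.2.2⟩
    · intro i hi j hj hij
      simp only [Finset.coe_filter, Finset.mem_range, hlen, Set.mem_ofPred_eq] at hi hj hij
      omega

/-- valid words of length `n` -/
noncomputable def V (n : ℕ) : Finset (List ℕ) :=
  (Finset.univ.filter fun σ : Equiv.Perm (Fin (n + 1)) => F (n + 1) σ).image (T.code n)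

theorem mem_V (n : ℕ) (l : List ℕ) : l ∈ T.V n ↔ l.length = n ∧ s.valid 2 l := by
  unfold V
  rw [Finset.mem_image]
  constructor
  · rintro ⟨σ, hσ, rfl⟩
    exact ⟨T.code_length n σ, (T.code_spec n σ (Finset.mem_filter.1 hσ).2).1⟩
  · rintro ⟨h1, h2⟩
    obtain ⟨σ, h3, h4⟩ := T.code_surj n l h1 h2
    exact ⟨σ, by simp [h3], h4⟩

theorem card_image (n : ℕ) (P : Equiv.Perm (Fin (n + 1)) → Prop) :
    (((Finset.univ.filter fun σ : Equiv.Perm (Fin (n + 1)) => F (n + 1) σ).filter P).image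
      (T.code n)).card =
    ((Finset.univ.filter fun σ : Equiv.Perm (Fin (n + 1)) => F (n + 1) σ).filter P).card := by
  apply Finset.card_image_of_injOn
  intro σ hσ τ hτ h
  simp only [Finset.coe_filter, Finset.mem_filter, Finset.mem_univ, true_and,
    Set.mem_ofPred_eq] at hσ hτ
  exact T.code_inj n σ τ hσ.1 hτ.1 h

theorem card_V (n : ℕ) : (T.V n).card =
    (Finset.univ.filter fun σ : Equiv.Perm (Fin (n + 1)) => F (n + 1) σ).card := by
  apply Finset.card_image_of_injOn
  intro σ hσ τ hτ h
  simp only [Finset.coe_filter, Finset.mem_univ, true_and, Set.mem_ofPred_eq] at hσ hτ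
  exact T.code_inj n σ τ hσ hτ h

theorem exists_B (s : Sch) (k : ℕ) (hk : 2 ≤ k) : ∃ B : Finset ℕ, ∀ a, s.ok k a ↔ a ∈ B := by
  have hfin : {a | s.ok k a}.Finite := by
    apply Set.Finite.of_injOn (f := s.dec k) (t := ↑(Finset.range k)) _ _ (Finset.finite_toSet _)
    · intro a ha
      simpa using s.dec_lt k a hk ha
    · intro a ha b hb hab
      exact s.dec_inj k a b hk ha hb hab
  exact ⟨hfin.toFinset, fun a => by simp⟩

theorem V_lower (h0 : s.d 0 = 0) (δ : ℝ) (hδ : 0 < δ) (hδ1 : δ < 1) :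
    ∃ c : ℝ, 0 < c ∧ ∀ n, c * (s.W * (1 - δ)) ^ n ≤ ((T.V (n + 1)).card : ℝ) := by
  obtain ⟨u, U, hu, hu3, hlow⟩ := s.lower δ hδ
  have hWp : 0 < s.W * (1 - δ) := mul_pos s.W_pos (by linarith)
  have step : ∀ n, s.W * (1 - δ) * ∑ l ∈ T.V n, u (s.lab 2 l) ≤
      ∑ l ∈ T.V (n + 1), u (s.lab 2 l) := by
    intro n
    have hB : ∀ k, ∃ B : Finset ℕ, 2 ≤ k → ∀ a, s.ok k a ↔ a ∈ B := by
      intro k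
      by_cases hk : 2 ≤ k
      · obtain ⟨B, hB⟩ := exists_B s k hk
        exact ⟨B, fun _ => hB⟩
      · exact ⟨∅, fun h => absurd h hk⟩
    choose B hB using hB
    have h2 : ∀ l ∈ T.V n, 2 ≤ s.lab 2 l := fun l hl => lab_ge l ((T.mem_V n l).1 hl).2
    calc s.W * (1 - δ) * ∑ l ∈ T.V n, u (s.lab 2 l)
        = ∑ l ∈ T.V n, s.W * (1 - δ) * u (s.lab 2 l) := Finset.mul_sum _ _ _
      _ ≤ ∑ l ∈ T.V n, ∑ a ∈ B (s.lab 2 l), u (s.nxt (s.lab 2 l) a) :=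
          Finset.sum_le_sum fun l hl => hlow _ _ (hB _ (h2 l hl))
      _ = ∑ q ∈ (T.V n).sigma fun l => B (s.lab 2 l), u (s.lab 2 (q.2 :: q.1)) := by
          rw [Finset.sum_sigma]; rfl
      _ = ∑ l ∈ ((T.V n).sigma fun l => B (s.lab 2 l)).image (fun q => q.2 :: q.1),
            u (s.lab 2 l) := by
          rw [Finset.sum_image]
          rintro ⟨l, a⟩ _ ⟨l', a'⟩ _ h
          simp only [List.cons.injEq] at h
          obtain ⟨rfl, rfl⟩ := h
          rfl
      _ ≤ _ := by
          apply Finset.sum_le_sum_of_subset_of_nonneg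
          · intro l hl
            rw [Finset.mem_image] at hl
            obtain ⟨⟨l, a⟩, hq, rfl⟩ := hl
            rw [Finset.mem_sigma] at hq
            have h3 := (T.mem_V n l).1 hq.1
            rw [T.mem_V]
            exact ⟨by simp [h3.1], h3.2, (hB _ (h2 l hq.1) a).2 hq.2⟩
          · intro l _ _; exact (hu _).1
  have hU : 0 < U := lt_of_lt_of_le hu3 (hu 3).2
  refine ⟨u 3 / U, by positivity, fun n => ?_⟩
  have hsum : u 3 * (s.W * (1 - δ)) ^ n ≤ ∑ l ∈ T.V (n + 1), u (s.lab 2 l) := by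
    induction n with
    | zero =>
      have hm : [0] ∈ T.V (0 + 1) := by
        rw [T.mem_V]
        refine ⟨rfl, trivial, ?_⟩
        have := s.hk
        simp only [Walk.ok, Walk.lab, h0]; omega
      have := Finset.single_le_sum (f := fun l => u (s.lab 2 l)) (fun l _ => (hu _).1) hm
      simp only [Walk.lab, Walk.nxt, h0] at this
      simpa using this
    | succ n ih =>
      refine le_trans ?_ (step (n + 1))
      rw [pow_succ]
      nlinarith
  have hle : ∑ l ∈ T.V (n + 1), u (s.lab 2 l) ≤ (T.V (n + 1)).card * U := by
    rw [← nsmul_eq_mul]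
    exact Finset.sum_le_card_nsmul _ _ _ fun l _ => (hu _).2
  rw [div_mul_eq_mul_div, div_le_iff₀ hU]
  exact hsum.trans hle

theorem final (T : GT s F) (h0 : s.d 0 = 0) : ∃ Λ : ∀ k : ℕ, Equiv.Perm (Fin k) → ℝ,
      (∀ (k : ℕ) (π : Equiv.Perm (Fin k)), 0 ≤ Λ k π ∧ Λ k π ≤ 1) ∧
      ∀ (k : ℕ) (π : Equiv.Perm (Fin k)) (ε : ℝ), 0 < ε →
        Filter.Tendsto
          (fun n : ℕ =>
            ((((Finset.univ.filter fun σ : Equiv.Perm (Fin n) => F n σ).filter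
                fun σ => ε ≤ |(cOcc π σ : ℝ) / (n : ℝ) - Λ k π|).card : ℝ) /
              (((Finset.univ.filter fun σ : Equiv.Perm (Fin n) => F n σ).card : ℝ))))
          Filter.atTop (nhds 0) := by
  refine ⟨fun h π => (EE s.p (h + 1) (fun w => if s.ev h (patQ π) w then 1 else 0)).toReal,
    fun h π => ⟨ENNReal.toReal_nonneg, ?_⟩, ?_⟩
  · have := EE_ind_le_one s.p s.p_sum (h + 1) (s.ev h (patQ π))
    exact ENNReal.toReal_le_of_le_ofReal zero_le_one (by simpa using this)
  intro h π ε hε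
  beta_reduce
  have hΛ0 : 0 ≤ (EE s.p (h + 1) (fun w => if s.ev h (patQ π) w then 1 else 0)).toReal :=
    ENNReal.toReal_nonneg
  have hΛ1 : (EE s.p (h + 1) (fun w => if s.ev h (patQ π) w then 1 else 0)).toReal ≤ 1 := by
    have := EE_ind_le_one s.p s.p_sum (h + 1) (s.ev h (patQ π))
    exact ENNReal.toReal_le_of_le_ofReal zero_le_one (by simpa using this)
  set S' : List ℕ → Prop := fun v => ¬ s.ev h (patQ π) v with hS'
  have hh : (0 : ℝ) < h + 2 := by positivity
  obtain ⟨q, C, hq0, hq1, hup⟩ := s.upper 2 (h + 1) (2 * h + 20) (by omega) (s.ev h (patQ π)) S'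
    (fun _ => Iff.rfl) (ε / (2 * (h + 2))) (by positivity)
  set Λ : ℝ := (EE s.p (h + 1) (fun w => if s.ev h (patQ π) w then 1 else 0)).toReal with hΛ
  obtain ⟨c, hc, hlow⟩ := T.V_lower h0 ((1 - q) / 2) (by linarith) (by linarith)
  set r : ℝ := 1 - (1 - q) / 2 with hr
  have hrq : q < r := by rw [hr]; linarith
  have hr0 : 0 < r := hq0.trans hrq
  have hW := s.W_pos
  rw [← Filter.tendsto_add_atTop_iff_nat 2]
  have hbound : ∀ᶠ n : ℕ in Filter.atTop,
      ((((Finset.univ.filter fun σ : Equiv.Perm (Fin (n + 2)) => F (n + 2) σ).filter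
                fun σ => ε ≤ |(cOcc π σ : ℝ) / ((n + 2 : ℕ) : ℝ) - Λ|).card : ℝ) /
              (((Finset.univ.filter fun σ : Equiv.Perm (Fin (n + 2)) => F (n + 2) σ).card : ℝ)))
        ≤ (C * (s.W * q) / c) * (q / r) ^ n := by
    obtain ⟨n0, hn0⟩ := exists_nat_gt ((2 * h + 4) / (ε / 2))
    filter_upwards [Filter.eventually_ge_atTop n0] with n hn
    have hn' : (2 * h + 4 : ℝ) < (n + 2) * (ε / 2) := by
      rw [div_lt_iff₀ (by positivity)] at hn0
      have : (n0 : ℝ) ≤ n := by exact_mod_cast hn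
      nlinarith
    have hb := hup (n + 1) (((Finset.univ.filter fun σ : Equiv.Perm (Fin (n + 2)) =>
      F (n + 2) σ).filter fun σ => ε ≤ |(cOcc π σ : ℝ) / ((n + 2 : ℕ) : ℝ) - Λ|).image
        (T.code (n + 1))) (by
      intro l hl
      rw [Finset.mem_image] at hl
      obtain ⟨σ, hσ, rfl⟩ := hl
      rw [Finset.mem_filter, Finset.mem_filter] at hσ
      have hF := hσ.1.2
      have hbad := hσ.2
      have hlen := T.code_length (n + 1) σ
      refine ⟨hlen, (T.code_spec (n + 1) σ hF).1, ?_⟩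
      by_contra hcon
      push Not at hcon
      obtain ⟨c1, c2, c3⟩ := hcon
      have b1 := T.cOcc_wocc π σ hF
      have b2 := s.wocc_le h (patQ π) 2 (T.code (n + 1) σ)
      have b3 := s.le_wocc h (patQ π) 2 (T.code (n + 1) σ) S' (fun _ => Iff.rfl)
      rw [hlen] at b3
      obtain ⟨b1, b1'⟩ := b1
      have B1 : (cOcc π σ : ℝ) ≤ cw (h + 1) (s.ev h (patQ π)) (T.code (n + 1) σ) +
        (h + 1) * (s.low (2 * h + 20) 2 (T.code (n + 1) σ) + 1) + 2 := by
          have : cOcc π σ ≤ cw (h + 1) (s.ev h (patQ π)) (T.code (n + 1) σ) +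
            (h + 1) * (s.low (2 * h + 20) 2 (T.code (n + 1) σ) + 1) + 2 := by omega
          exact_mod_cast this
      have B2 : (n + 1 : ℝ) ≤ cOcc π σ + cw (h + 1) S' (T.code (n + 1) σ) +
        (h + 1) * (s.low (2 * h + 20) 2 (T.code (n + 1) σ) + 1) + h := by
          have : n + 1 ≤ cOcc π σ + cw (h + 1) S' (T.code (n + 1) σ) +
            (h + 1) * (s.low (2 * h + 20) 2 (T.code (n + 1) σ) + 1) + h := by omega
          exact_mod_cast this
      generalize (cw (h + 1) (s.ev h (patQ π)) (T.code (n + 1) σ) : ℝ) = x1 at *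
      generalize (cw (h + 1) S' (T.code (n + 1) σ) : ℝ) = x2 at *
      generalize (s.low (2 * h + 20) 2 (T.code (n + 1) σ) : ℝ) = x3 at *
      set e : ℝ := ε / (2 * (h + 2)) with he
      have he2 : (h + 2) * e = ε / 2 := by rw [he]; field_simp
      have he0 : 0 < e := by positivity
      generalize (cOcc π σ : ℝ) = Y at *
      push_cast at c1 c2 c3 hbad
      have hn2 : (0 : ℝ) < n + 2 := by positivity
      have hx3 : (h + 1 : ℝ) * (x3 + 1) ≤ (h + 1) * ((n + 1) * e + 1) := by
        apply mul_le_mul_of_nonneg_left _ (by positivity)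
        linarith
      have hne : (n + 1 : ℝ) * e * (h + 2) = (n + 1) * (ε / 2) := by rw [← he2]; ring
      have : |Y / (n + 2) - Λ| < ε := by
        rw [abs_lt]
        constructor
        · rw [lt_sub_iff_add_lt, lt_div_iff₀ hn2]
          nlinarith
        · rw [sub_lt_iff_lt_add, div_lt_iff₀ hn2]
          nlinarith
      linarith)
    rw [T.card_image (n + 1)] at hb
    have hv := hlow n
    rw [T.card_V] at hv
    have hWn : 0 < c * (s.W * r) ^ n := mul_pos hc (pow_pos (mul_pos hW hr0) _)
    calc _ ≤ (C * (s.W * q) ^ (n + 1)) / (c * (s.W * r) ^ n) := by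
            apply div_le_div₀ _ hb hWn hv
            exact le_trans (Nat.cast_nonneg _) hb
      _ = _ := by
            rw [pow_succ, mul_pow, mul_pow, div_pow]
            field_simp
  refine squeeze_zero' (Filter.Eventually.of_forall fun n => by positivity) hbound ?_
  have : Filter.Tendsto (fun n : ℕ => (q / r) ^ n) Filter.atTop (nhds 0) :=
    tendsto_pow_atTop_nhds_zero_of_lt_one (by positivity) ((div_lt_one hr0).2 hrq)
  simpa using this.const_mul (C * (s.W * q) / c)

end GT


theorem count_cf (P : ℕ → Prop) (f : ℕ → ℕ) (h0 : f 0 = 0) (h1 : ∀ v, P v → f (v + 1) = f v + 1)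
    (h2 : ∀ v, ¬ P v → f (v + 1) = f v) (v : ℕ) : Nat.count P v = f v := by
  induction v with
  | zero => simp [h0]
  | succ v ih =>
    rw [Nat.count_succ, ih]
    by_cases h : P v
    · rw [if_pos h, h1 v h]
    · rw [if_neg h, h2 v h, Nat.add_zero]

/-- Build a scheme from closed formulas for the counts. -/
def mkSch (w : Walk) (R : ℕ → ℕ → ℕ → Prop) (dec : ℕ → ℕ → ℕ) (f : ℕ → ℕ → ℕ → ℕ)
    (hk2 : 2 ≤ w.kmin)
    (f0 : ∀ k j, j < k → f k j 0 = 0)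
    (f1 : ∀ k j v, j < k → R k j v → f k j (v + 1) = f k j v + 1)
    (f2 : ∀ k j v, j < k → ¬ R k j v → f k j (v + 1) = f k j v)
    (dec_lt : ∀ k a, 2 ≤ k → w.kmin + w.d a ≤ k + 1 → dec k a < k)
    (dec_inj : ∀ k a b, 2 ≤ k → w.kmin + w.d a ≤ k + 1 → w.kmin + w.d b ≤ k + 1 →
      dec k a = dec k b → a = b)
    (cnt : ∀ k a, 2 ≤ k → w.kmin + w.d a ≤ k + 1 → f k (dec k a) (k + 1) = k + 1 - w.d a)
    (loc_start : ∀ k a, 20 ≤ k → 20 ≤ k + 1 - w.d a → SRel 1 (k + 1 - w.d a)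
      (f k (dec k a) (dec k a + 1)) (f (k + 1) (dec (k + 1) a) (dec (k + 1) a + 1)))
    (loc_step : ∀ t k a g g', 2 * t + 20 ≤ k → 2 * t + 20 ≤ k + 1 - w.d a → SRel t k g g' →
      (g ≤ dec k a ↔ g' ≤ dec (k + 1) a) ∧
      SRel (t + 1) (k + 1 - w.d a)
        (f k (dec k a) (if g ≤ dec k a then g else g + 1))
        (f (k + 1) (dec (k + 1) a) (if g' ≤ dec (k + 1) a then g' else g' + 1))) : Sch :=
  have key : ∀ k j v, j < k → Nat.count (R k j) v = f k j v := fun k j v hj =>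
    count_cf (R k j) (f k j) (f0 k j hj) (fun v => f1 k j v hj) (fun v => f2 k j v hj) v
  { toWalk := w
    R := R
    dec := dec
    hk2 := hk2
    dec_lt := dec_lt
    dec_inj := dec_inj
    cnt := fun k a h1 h2 => by
      rw [key _ _ _ (dec_lt k a h1 h2)]; exact cnt k a h1 h2
    loc_start := fun k a h1 h2 => by
      have hk := w.hk
      have h3 := h2
      unfold Walk.nxt at h3
      rw [key _ _ _ (dec_lt k a (by omega) (by omega)),
        key _ _ _ (dec_lt (k + 1) a (by omega) (by omega))]
      exact loc_start k a h1 h2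
    loc_step := fun t k a g g' h1 h2 hr => by
      have hk := w.hk
      have h3 := h2
      unfold Walk.nxt at h3
      rw [key _ _ _ (dec_lt k a (by omega) (by omega)),
        key _ _ _ (dec_lt (k + 1) a (by omega) (by omega))]
      exact loc_step t k a g g' h1 h2 hr }

theorem sum_pow2 (x A : ℝ) (h0 : 0 < x) (h1 : x < 1) :
    Summable (fun a : ℕ => A * x ^ a * (a : ℝ) ^ 2) := by
  have := (summable_pow_mul_geometric_of_norm_lt_one 2
    (show ‖x‖ < 1 by rw [Real.norm_of_nonneg h0.le]; exact h1)).mul_left A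
  refine this.congr fun a => by ring

theorem sum_pow1 (x A : ℝ) (h0 : 0 < x) (h1 : x < 1) :
    HasSum (fun a : ℕ => A * x ^ a * (a : ℝ)) (A * (x / (1 - x) ^ 2)) := by
  have := (hasSum_coe_mul_geometric_of_norm_lt_one
    (show ‖x‖ < 1 by rw [Real.norm_of_nonneg h0.le]; exact h1)).mul_left A
  refine this.congr_fun fun a => by ring

theorem sum_pow0 (x A : ℝ) (h0 : 0 < x) (h1 : x < 1) :
    HasSum (fun a : ℕ => A * x ^ a) (A * (1 - x)⁻¹) :=
  (hasSum_geometric_of_lt_one h0.le h1).mul_left A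

noncomputable def wCat : Walk where
  d := fun a => a
  kmin := 2
  x := 1 / 2
  A := 1 / 2
  hx0 := by norm_num
  hx1 := by norm_num
  hA := by norm_num
  hk := by norm_num
  sum0 := by
    have := sum_pow0 (1 / 2) (1 / 2) (by norm_num) (by norm_num)
    norm_num at this ⊢; exact this
  sum1 := by
    have := sum_pow1 (1 / 2) (1 / 2) (by norm_num) (by norm_num)
    norm_num at this ⊢; exact this
  sum2 := sum_pow2 (1 / 2) (1 / 2) (by norm_num) (by norm_num)
  unb := fun M => ⟨M, le_rfl⟩

noncomputable def wSch : Walk where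
  d := fun a => a - 1
  kmin := 3
  x := 2 - √2
  A := 1 - √2 / 2
  hx0 := by nlinarith [Real.sq_sqrt (show (0 : ℝ) ≤ 2 by norm_num), Real.sqrt_nonneg 2]
  hx1 := by nlinarith [Real.sq_sqrt (show (0 : ℝ) ≤ 2 by norm_num), Real.sqrt_nonneg 2]
  hA := by nlinarith [Real.sq_sqrt (show (0 : ℝ) ≤ 2 by norm_num), Real.sqrt_nonneg 2]
  hk := by norm_num
  sum0 := by
    have hs := Real.sq_sqrt (show (0 : ℝ) ≤ 2 by norm_num)
    have h0 : 0 < 2 - √2 := by nlinarith [Real.sqrt_nonneg 2]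
    have h1 : 2 - √2 < 1 := by nlinarith [Real.sqrt_nonneg 2]
    have h := sum_pow0 (2 - √2) (1 - √2 / 2) h0 h1
    have h' := HasSum.zero_add (f := fun a : ℕ => (1 - √2 / 2) * (2 - √2) ^ (a - 1)) (by simpa using h)
    convert h' using 1
    have : 1 - (2 - √2) ≠ 0 := by linarith
    field_simp
    simp
    nlinarith
  sum1 := by
    have hs := Real.sq_sqrt (show (0 : ℝ) ≤ 2 by norm_num)
    have h0 : 0 < 2 - √2 := by nlinarith [Real.sqrt_nonneg 2]
    have h1 : 2 - √2 < 1 := by nlinarith [Real.sqrt_nonneg 2]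
    have h := sum_pow1 (2 - √2) (1 - √2 / 2) h0 h1
    have h' := HasSum.zero_add
      (f := fun a : ℕ => (1 - √2 / 2) * (2 - √2) ^ (a - 1) * ((a - 1 : ℕ) : ℝ)) (by simpa using h)
    convert h' using 1
    have : 1 - (2 - √2) ≠ 0 := by linarith
    field_simp
    simp
    nlinarith
  sum2 := by
    have hs := Real.sq_sqrt (show (0 : ℝ) ≤ 2 by norm_num)
    have h0 : 0 < 2 - √2 := by nlinarith [Real.sqrt_nonneg 2]
    have h1 : 2 - √2 < 1 := by nlinarith [Real.sqrt_nonneg 2]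
    have h := sum_pow2 (2 - √2) (1 - √2 / 2) h0 h1
    rw [← summable_nat_add_iff 1]
    simpa using h
  unb := fun M => ⟨M + 1, by simp⟩

noncomputable def wMot : Walk where
  d := fun a => if a = 0 then 0 else a + 1
  kmin := 2
  x := 1 / 2
  A := 2 / 3
  hx0 := by norm_num
  hx1 := by norm_num
  hA := by norm_num
  hk := by norm_num
  sum0 := by
    have h := sum_pow0 (1 / 2) (1 / 6) (by norm_num) (by norm_num)
    have h' := HasSum.zero_add (f := fun a : ℕ => (2 / 3 : ℝ) * (1 / 2) ^ (if a = 0 then 0 else a + 1))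
      (by
        refine h.congr_fun fun a => ?_
        simp only [Nat.add_eq_zero_iff, one_ne_zero, and_false, if_false]
        ring)
    convert h' using 1
    norm_num
  sum1 := by
    have h := (sum_pow1 (1 / 2) (1 / 6) (by norm_num) (by norm_num)).add
      (sum_pow0 (1 / 2) (1 / 3) (by norm_num) (by norm_num))
    have h' := HasSum.zero_add (f := fun a : ℕ => (2 / 3 : ℝ) * (1 / 2) ^ (if a = 0 then 0 else a + 1)
        * ((if a = 0 then 0 else a + 1 : ℕ) : ℝ))
      (by
        refine h.congr_fun fun a => ?_
        simp only [Nat.add_eq_zero_iff, one_ne_zero, and_false, if_false]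
        push_cast
        ring)
    convert h' using 1
    norm_num
  sum2 := by
    have h := sum_pow2 (1 / 2) (2 / 3) (by norm_num) (by norm_num)
    rw [← summable_nat_add_iff 1]
    rw [← summable_nat_add_iff 2] at h
    refine h.congr fun a => ?_
    simp only [Nat.add_eq_zero_iff, one_ne_zero, and_false, if_false, add_assoc, Nat.reduceAdd]
  unb := fun M => ⟨M + 1, by simp; omega⟩

noncomputable def wOdd : Walk where
  d := fun a => 2 * a
  kmin := 2
  x := √(1 / 3)
  A := 2 / 3
  hx0 := by positivity
  hx1 := by rw [Real.sqrt_lt' (by norm_num)]; norm_num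
  hA := by norm_num
  hk := by norm_num
  sum0 := by
    have h := sum_pow0 (1 / 3) (2 / 3) (by norm_num) (by norm_num)
    simp only [pow_mul, Real.sq_sqrt (show (0 : ℝ) ≤ 1 / 3 by norm_num)]
    convert h using 1
    norm_num
  sum1 := by
    have h := sum_pow1 (1 / 3) (4 / 3) (by norm_num) (by norm_num)
    simp only [pow_mul, Real.sq_sqrt (show (0 : ℝ) ≤ 1 / 3 by norm_num)]
    convert h using 1
    · ext a; push_cast; ring
    · norm_num
  sum2 := by
    have h := sum_pow2 (1 / 3) (8 / 3) (by norm_num) (by norm_num)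
    simp only [pow_mul, Real.sq_sqrt (show (0 : ℝ) ≤ 1 / 3 by norm_num)]
    refine h.congr fun a => ?_
    push_cast; ring
  unb := fun M => ⟨M, by omega⟩


noncomputable def s123 : Sch :=
  mkSch wCat (fun k j i => j = 0 ∨ i ≤ j) (fun k a => if a = 0 then 0 else k - a) (fun k j v => if j = 0 then v else min v (j + 1))
    (by simp only [wCat]; omega)
    (by intro k j; (try split_ifs) <;> omega)
    (by intro k j v; (try split_ifs) <;> omega)
    (by intro k j v; (try split_ifs) <;> omega)
    (by intro k a; simp only [wCat]; (try split_ifs) <;> omega)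
    (by intro k a b; simp only [wCat]; (try split_ifs) <;> omega)
    (by intro k a; simp only [wCat]; (try split_ifs) <;> omega)
    (by intro k a; simp only [wCat, SRel]; (try split_ifs) <;> omega)
    (by intro t k a g g'; simp only [wCat, SRel]; (try split_ifs) <;> omega)

noncomputable def s132 : Sch :=
  mkSch wCat (fun k j i => i = 0 ∨ j + 1 ≤ i) (fun k a => a) (fun k j v => min v 1 + (v - (j + 1)))
    (by simp only [wCat]; omega)
    (by intro k j; (try split_ifs) <;> omega)
    (by intro k j v; (try split_ifs) <;> omega)
    (by intro k j v; (try split_ifs) <;> omega)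
    (by intro k a; simp only [wCat]; (try split_ifs) <;> omega)
    (by intro k a b; simp only [wCat]; (try split_ifs) <;> omega)
    (by intro k a; simp only [wCat]; (try split_ifs) <;> omega)
    (by intro k a; simp only [wCat, SRel, true_and]; intro h1 h2; left; omega)
    (by intro t k a g g'; simp only [wCat, SRel]; (try split_ifs) <;> omega)

noncomputable def s1234 : Sch :=
  mkSch wSch (fun k j i => j ≤ 1 ∨ i ≤ j) (fun k a => if a ≤ 1 then a else k + 1 - a) (fun k j v => if j ≤ 1 then v else min v (j + 1))
    (by simp only [wSch]; omega)
    (by intro k j; (try split_ifs) <;> omega)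
    (by intro k j v; (try split_ifs) <;> omega)
    (by intro k j v; (try split_ifs) <;> omega)
    (by intro k a; simp only [wSch]; (try split_ifs) <;> omega)
    (by intro k a b; simp only [wSch]; (try split_ifs) <;> omega)
    (by intro k a; simp only [wSch]; (try split_ifs) <;> omega)
    (by intro k a; simp only [wSch, SRel]; (try split_ifs) <;> omega)
    (by intro t k a g g'; simp only [wSch, SRel]; (try split_ifs) <;> omega)

noncomputable def s1324 : Sch :=
  mkSch wSch (fun k j i => j = 0 ∨ i ≤ j + 1) (fun k a => if a = 0 then 0 else k - a) (fun k j v => if j = 0 then v else min v (j + 2))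
    (by simp only [wSch]; omega)
    (by intro k j; (try split_ifs) <;> omega)
    (by intro k j v; (try split_ifs) <;> omega)
    (by intro k j v; (try split_ifs) <;> omega)
    (by intro k a; simp only [wSch]; (try split_ifs) <;> omega)
    (by intro k a b; simp only [wSch]; (try split_ifs) <;> omega)
    (by intro k a; simp only [wSch]; (try split_ifs) <;> omega)
    (by intro k a; simp only [wSch, SRel]; (try split_ifs) <;> omega)
    (by intro t k a g g'; simp only [wSch, SRel]; (try split_ifs) <;> omega)

noncomputable def s2314 : Sch :=
  mkSch wSch (fun k j i => i ≤ j + 2) (fun k a => k - 1 - a) (fun k j v => min v (j + 3))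
    (by simp only [wSch]; omega)
    (by intro k j; (try split_ifs) <;> omega)
    (by intro k j v; (try split_ifs) <;> omega)
    (by intro k j v; (try split_ifs) <;> omega)
    (by intro k a; simp only [wSch]; (try split_ifs) <;> omega)
    (by intro k a b; simp only [wSch]; (try split_ifs) <;> omega)
    (by intro k a; simp only [wSch]; (try split_ifs) <;> omega)
    (by intro k a; simp only [wSch, SRel]; (try split_ifs) <;> omega)
    (by intro t k a g g'; simp only [wSch, SRel]; (try split_ifs) <;> omega)

noncomputable def s2413 : Sch :=
  mkSch wSch (fun k j i => i ≤ j + 1 ∨ i = k) (fun k a => k - 1 - a) (fun k j v => min v (j + 2) + (if k < v ∧ j + 1 < k then 1 else 0))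
    (by simp only [wSch]; omega)
    (by intro k j; (try split_ifs) <;> omega)
    (by intro k j v; (try split_ifs) <;> omega)
    (by intro k j v; (try split_ifs) <;> omega)
    (by intro k a; simp only [wSch]; (try split_ifs) <;> omega)
    (by intro k a b; simp only [wSch]; (try split_ifs) <;> omega)
    (by intro k a; simp only [wSch]; (try split_ifs) <;> omega)
    (by intro k a; simp only [wSch, SRel]; (try split_ifs) <;> omega)
    (by intro t k a g g'; simp only [wSch, SRel]; (try split_ifs) <;> omega)

noncomputable def s3412 : Sch :=
  mkSch wSch (fun k j i => i ≤ j ∨ k ≤ i + 1) (fun k a => k - 1 - a) (fun k j v => min v (j + 1) + (v - max (j + 1) (k - 1)))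
    (by simp only [wSch]; omega)
    (by intro k j; (try split_ifs) <;> omega)
    (by intro k j v; (try split_ifs) <;> omega)
    (by intro k j v; (try split_ifs) <;> omega)
    (by intro k a; simp only [wSch]; (try split_ifs) <;> omega)
    (by intro k a b; simp only [wSch]; (try split_ifs) <;> omega)
    (by intro k a; simp only [wSch]; (try split_ifs) <;> omega)
    (by intro k a; simp only [wSch, SRel]; (try split_ifs) <;> omega)
    (by intro t k a g g'; simp only [wSch, SRel]; (try split_ifs) <;> omega)

noncomputable def s1423 : Sch :=
  mkSch wSch (fun k j i => j = 0 ∨ i ≤ j ∨ i = k) (fun k a => if a = 0 then 0 else k - a) (fun k j v => if j = 0 then v else min v (j + 1) + (if k < v then 1 else 0))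
    (by simp only [wSch]; omega)
    (by intro k j; (try split_ifs) <;> omega)
    (by intro k j v; (try split_ifs) <;> omega)
    (by intro k j v; (try split_ifs) <;> omega)
    (by intro k a; simp only [wSch]; (try split_ifs) <;> omega)
    (by intro k a b; simp only [wSch]; (try split_ifs) <;> omega)
    (by intro k a; simp only [wSch]; (try split_ifs) <;> omega)
    (by intro k a; simp only [wSch, SRel]; (try split_ifs) <;> omega)
    (by intro t k a g g'; simp only [wSch, SRel]; (try split_ifs) <;> omega)

noncomputable def sA : Sch :=
  mkSch wMot (fun k j i => i ≤ j + 1) (fun k a => if a = 0 then k - 1 else k - 2 - a) (fun k j v => min v (j + 2))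
    (by simp only [wMot]; omega)
    (by intro k j; (try split_ifs) <;> omega)
    (by intro k j v; (try split_ifs) <;> omega)
    (by intro k j v; (try split_ifs) <;> omega)
    (by intro k a; simp only [wMot]; (try split_ifs) <;> omega)
    (by intro k a b; simp only [wMot]; (try split_ifs) <;> omega)
    (by intro k a; simp only [wMot]; (try split_ifs) <;> omega)
    (by intro k a; simp only [wMot, SRel]; (try split_ifs) <;> omega)
    (by intro t k a g g'; simp only [wMot, SRel]; (try split_ifs) <;> omega)

noncomputable def sB : Sch :=
  mkSch wOdd (fun k j i => i ≤ j + 1) (fun k a => k - 1 - 2 * a) (fun k j v => min v (j + 2))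
    (by simp only [wOdd]; omega)
    (by intro k j; (try split_ifs) <;> omega)
    (by intro k j v; (try split_ifs) <;> omega)
    (by intro k j v; (try split_ifs) <;> omega)
    (by intro k a; simp only [wOdd]; (try split_ifs) <;> omega)
    (by intro k a b; simp only [wOdd]; (try split_ifs) <;> omega)
    (by intro k a; simp only [wOdd]; (try split_ifs) <;> omega)
    (by intro k a; simp only [wOdd, SRel]; (try split_ifs) <;> omega)
    (by intro t k a g g'; simp only [wOdd, SRel]; (try split_ifs) <;> omega)



def fm (m v : ℕ) : ℕ := if v < m then v else v + 1

theorem app_fm {n : ℕ} (σ : Equiv.Perm (Fin n)) (m : Fin (n + 1)) (i : Fin n) :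
    (app σ m i.castSucc : ℕ) = fm m (σ i) := app_val σ m i

/-- `σ` contains values `p, q` (before `r`), `r` (before `t`), `t` in the relation `C`. -/
def hasC (C : ℕ → ℕ → ℕ → ℕ → Prop) {n : ℕ} (σ : Equiv.Perm (Fin n)) : Prop :=
  ∃ p q r t : Fin n, p < r ∧ q < r ∧ r < t ∧ C (σ p) (σ q) (σ r) (σ t)

def siteC (C : ℕ → ℕ → ℕ → ℕ → Prop) (n : ℕ) (σ : Equiv.Perm (Fin n)) (m : ℕ) : Prop :=
  ¬ ∃ p q r : Fin n, p < r ∧ q < r ∧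
    C (2 * (σ p : ℕ) + 1) (2 * (σ q : ℕ) + 1) (2 * (σ r : ℕ) + 1) (2 * m)

/-- `C` only depends on the relative order. -/
def CInv (C : ℕ → ℕ → ℕ → ℕ → Prop) : Prop :=
  ∀ (g : ℕ → ℕ) (P : ℕ → Prop), (∀ x y, P x → P y → (g x < g y ↔ x < y)) →
    ∀ a b c d, P a → P b → P c → P d → (C (g a) (g b) (g c) (g d) ↔ C a b c d)

theorem hasC_app {C : ℕ → ℕ → ℕ → ℕ → Prop} (hC : CInv C) {n : ℕ} (σ : Equiv.Perm (Fin n))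
    (m : Fin (n + 1)) : hasC C (app σ m) ↔ hasC C σ ∨ ¬ siteC C n σ m := by
  have i1 : ∀ a b c d, C (fm m a) (fm m b) (fm m c) (fm m d) ↔ C a b c d := fun a b c d =>
    hC (fm m) (fun _ => True) (by intro x y _ _; unfold fm; split_ifs <;> omega) a b c d
      trivial trivial trivial trivial
  have i2 : ∀ a b c, C (fm m a) (fm m b) (fm m c) m ↔
      C (2 * a + 1) (2 * b + 1) (2 * c + 1) (2 * m) := fun a b c => by
    have := hC (fun w => if w = 2 * (m : ℕ) then (m : ℕ) else fm m ((w - 1) / 2))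
      (fun w => w = 2 * (m : ℕ) ∨ w % 2 = 1)
      (by intro x y hx hy; unfold fm; split_ifs <;> omega)
      (2 * a + 1) (2 * b + 1) (2 * c + 1) (2 * m) (by omega) (by omega) (by omega) (by omega)
    have e : ∀ a, 2 * a + 1 ≠ 2 * (m : ℕ) := fun a => by omega
    have e2 : ∀ a, (2 * a + 1 - 1) / 2 = a := fun a => by omega
    simpa only [e, e2, if_false, if_true] using this
  unfold siteC
  rw [not_not]
  constructor
  · rintro ⟨p, q, r, t, h1, h2, h3, h⟩
    induction r using Fin.lastCases with
    | last => exact absurd h3 (not_lt.2 (Fin.le_last _))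
    | cast r =>
      induction p using Fin.lastCases with
      | last => exact absurd h1 (not_lt.2 (Fin.le_last _))
      | cast p =>
        induction q using Fin.lastCases with
        | last => exact absurd h2 (not_lt.2 (Fin.le_last _))
        | cast q =>
          rw [Fin.castSucc_lt_castSucc_iff] at h1 h2
          simp only [app_fm] at h
          induction t using Fin.lastCases with
          | last =>
            rw [app_last, i2] at h
            exact Or.inr ⟨p, q, r, h1, h2, h⟩
          | cast t =>
            rw [app_fm, i1] at h
            exact Or.inl ⟨p, q, r, t, h1, h2, by simpa using h3, h⟩
  · rintro (⟨p, q, r, t, h1, h2, h3, h⟩ | ⟨p, q, r, h1, h2, h⟩)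
    · refine ⟨p.castSucc, q.castSucc, r.castSucc, t.castSucc, by simpa, by simpa, by simpa, ?_⟩
      simpa only [app_fm, i1] using h
    · refine ⟨p.castSucc, q.castSucc, r.castSucc, Fin.last n, by simpa, by simpa,
        Fin.castSucc_lt_last r, ?_⟩
      simpa only [app_fm, app_last, i2] using h

theorem siteC_app {C : ℕ → ℕ → ℕ → ℕ → Prop} (hC : CInv C) {n : ℕ} (σ : Equiv.Perm (Fin n))
    (m : Fin (n + 1)) (m' : ℕ) : siteC C (n + 1) (app σ m) m' ↔ siteC C n σ (pre m m') ∧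
      ¬ ∃ x y, x ≤ n ∧ y ≤ n ∧ x ≠ m ∧ y ≠ m ∧
        C (2 * x + 1) (2 * y + 1) (2 * (m : ℕ) + 1) (2 * m') := by
  have i2 : ∀ a b c, C (2 * fm m a + 1) (2 * fm m b + 1) (2 * fm m c + 1) (2 * m') ↔
      C (2 * a + 1) (2 * b + 1) (2 * c + 1) (2 * pre m m') := fun a b c => by
    have := hC (fun w => if w = 2 * pre m m' then 2 * m' else 2 * fm m ((w - 1) / 2) + 1)
      (fun w => w = 2 * pre m m' ∨ w % 2 = 1)
      (by intro x y hx hy; unfold fm; unfold pre at *; split_ifs at * <;> omega)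
      (2 * a + 1) (2 * b + 1) (2 * c + 1) (2 * pre m m') (by omega) (by omega) (by omega) (by omega)
    have e : ∀ a, 2 * a + 1 ≠ 2 * pre m m' := fun a => by omega
    have e2 : ∀ a, (2 * a + 1 - 1) / 2 = a := fun a => by omega
    simpa only [e, e2, if_false, if_true] using this
  have hval : ∀ i : Fin n, (app σ m i.castSucc : ℕ) ≤ n ∧ (app σ m i.castSucc : ℕ) ≠ m := by
    intro i
    have := (σ i).isLt
    rw [app_fm]
    unfold fm
    split_ifs <;> omega
  have hsur : ∀ x, x ≤ n → x ≠ m → ∃ i : Fin n, (app σ m i.castSucc : ℕ) = x := by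
    intro x hx hxm
    have hm := m.isLt
    have hlt : (if x < m then x else x - 1) < n := by split_ifs <;> omega
    refine ⟨σ.symm ⟨_, hlt⟩, ?_⟩
    rw [app_fm, Equiv.apply_symm_apply]
    unfold fm
    simp only []
    split_ifs <;> omega
  unfold siteC
  rw [← not_or, not_iff_not]
  constructor
  · rintro ⟨p, q, r, h1, h2, h⟩
    induction p using Fin.lastCases with
    | last => exact absurd h1 (not_lt.2 (Fin.le_last _))
    | cast p =>
      induction q using Fin.lastCases with
      | last => exact absurd h2 (not_lt.2 (Fin.le_last _))
      | cast q =>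
        induction r using Fin.lastCases with
        | last =>
          rw [app_last] at h
          exact Or.inr ⟨_, _, (hval p).1, (hval q).1, (hval p).2, (hval q).2, h⟩
        | cast r =>
          simp only [app_fm, i2] at h
          exact Or.inl ⟨p, q, r, by simpa using h1, by simpa using h2, h⟩
  · rintro (⟨p, q, r, h1, h2, h⟩ | ⟨x, y, hx, hy, hxm, hym, h⟩)
    · refine ⟨p.castSucc, q.castSucc, r.castSucc, by simpa, by simpa, ?_⟩
      simpa only [app_fm, i2] using h
    · obtain ⟨p, rfl⟩ := hsur x hx hxm
      obtain ⟨q, rfl⟩ := hsur y hy hym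
      refine ⟨p.castSucc, q.castSucc, Fin.last n, Fin.castSucc_lt_last p, Fin.castSucc_lt_last q, ?_⟩
      rw [app_last]
      exact h

/-- Generating tree of a class given by avoiding `C`. -/
def mkGT (s : Sch) (F : ∀ n, Equiv.Perm (Fin n) → Prop) (C : ℕ → ℕ → ℕ → ℕ → Prop)
    (hC : CInv C) (hFC : ∀ n (σ : Equiv.Perm (Fin n)), F n σ ↔ ¬ hasC C σ)
    (NK : ℕ → ℕ → ℕ → Prop)
    (nk : ∀ n m m', 1 ≤ n → m ≤ n → m' ≤ n + 1 →
      ((∃ x y, x ≤ n ∧ y ≤ n ∧ x ≠ m ∧ y ≠ m ∧ C (2 * x + 1) (2 * y + 1) (2 * m + 1) (2 * m')) ↔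
        ¬ NK n m m'))
    (surj : ∀ k j, 2 ≤ k → j < k → ∃ a, s.kmin + s.d a ≤ k + 1 ∧ s.dec k a = j)
    (trans : ∀ n (σ : Equiv.Perm (Fin n)) m m', 1 ≤ n → m ≤ n → m' ≤ n + 1 → siteC C n σ m →
      siteC C n σ (pre m m') → (NK n m m' ↔ s.R (Nat.count (siteC C n σ) (n + 1))
        (Nat.count (siteC C n σ) m) (Nat.count (fun x => siteC C n σ (pre m x)) m'))) : GT s F where
  Site := siteC C
  F1 := fun σ => by
    rw [hFC]
    rintro ⟨p, q, r, t, h1, h2, h3, h⟩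
    omega
  S10 := fun σ => by
    rintro ⟨p, q, r, h1, h2, h⟩
    omega
  S11 := fun σ => by
    rintro ⟨p, q, r, h1, h2, h⟩
    omega
  hFp := fun n σ m h => by
    rw [hFC] at *
    rw [hasC_app hC] at h
    exact fun h' => h (Or.inl h')
  hFS := fun n σ m h hk => by
    rw [hFC] at *
    rw [hasC_app hC]
    constructor
    · intro h1
      have hs : siteC C (n + 1) σ m := by
        by_contra h2
        exact h1 (Or.inr h2)
      refine ⟨hs, surj _ _ hk ?_⟩
      exact Nat.count_strict_mono hs m.isLt
    · rintro ⟨h1, _⟩ (h2 | h2)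
      · exact h h2
      · exact h2 h1
  hS := fun n σ m h hk hs m' hm' => by
    rw [siteC_app hC]
    have hm := m.isLt
    apply and_congr_right
    intro hp
    rw [nk (n + 1) m m' (by omega) (by omega) (by omega), not_not]
    exact trans (n + 1) σ m m' (by omega) (by omega) (by omega) hs hp


theorem cle (L : ℕ → Prop) (a b : ℕ) (ha : L a) (hb : L b) :
    a ≤ b ↔ Nat.count L a ≤ Nat.count L b := by
  constructor
  · intro h; exact Nat.count_monotone _ h
  · intro h
    by_contra hc
    have := Nat.count_strict_mono hb (show b < a by omega)
    omega

theorem cpre0 (S : ℕ → Prop) (m : ℕ) :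
    Nat.count (fun x => S (pre m x)) m = Nat.count S m := count_pre_le S m m le_rfl

theorem cpre1 (S : ℕ → Prop) (m : ℕ) (hm : S m) :
    Nat.count (fun x => S (pre m x)) (m + 1) = Nat.count S m + 1 := count_pre_gt S m m hm le_rfl

theorem pre_self (m : ℕ) : pre m m = m := by simp [pre]

theorem pre_succ (m : ℕ) : pre m (m + 1) = m := by simp [pre]

theorem cpreN (S : ℕ → Prop) (m n : ℕ) (hm : S m) (hmn : m ≤ n)
    (h1 : S (pre m (n + 1))) :
    Nat.count (fun x => S (pre m x)) (n + 1) = Nat.count S (n + 1) := by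
  have h := count_pre_gt S m (n + 1) hm (by omega)
  rw [Nat.count_succ, if_pos h1] at h
  omega

theorem cpreN' (S : ℕ → Prop) (m n : ℕ) (hm : S m) (hmn : m ≤ n)
    (h1 : S (pre m (n + 1))) (h0 : S (pre m n)) :
    Nat.count (fun x => S (pre m x)) n + 1 = Nat.count S (n + 1) := by
  have h := cpreN S m n hm hmn h1
  rw [Nat.count_succ, if_pos h0] at h
  exact h

theorem c_zero (S : ℕ → Prop) (h0 : S 0) (m : ℕ) : m = 0 ↔ Nat.count S m = 0 := by
  constructor
  · rintro rfl; simp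
  · intro h
    by_contra hc
    have := Nat.count_strict_mono h0 (show 0 < m by omega)
    omega

theorem le_pre (S : ℕ → Prop) (m m' : ℕ) (hm : S m) (hm' : S (pre m m')) :
    (m' ≤ m ↔ Nat.count (fun x => S (pre m x)) m' ≤ Nat.count S m) ∧
    (m' ≤ m + 1 ↔ Nat.count (fun x => S (pre m x)) m' ≤ Nat.count S m + 1) := by
  rw [← cpre1 S m hm, ← cpre0 S m]
  have := cle (fun x => S (pre m x)) m' m hm' (by simpa [pre_self] using hm)
  have h2 := cle (fun x => S (pre m x)) m' (m + 1) hm' (by simpa [pre_succ] using hm)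
  exact ⟨this, h2⟩

def C123 (p _q r t : ℕ) : Prop := p < r ∧ r < t
def C132 (p _q r t : ℕ) : Prop := p < t ∧ t < r
def C213 (p _q r t : ℕ) : Prop := r < p ∧ p < t
def C1423 (p q r t : ℕ) : Prop := p < r ∧ r < t ∧ t < q
def C1234 (p q r t : ℕ) : Prop := p < q ∧ q < r ∧ r < t
def C1324 (p q r t : ℕ) : Prop := p < r ∧ r < q ∧ q < t
def C2314 (p q r t : ℕ) : Prop := r < p ∧ p < q ∧ q < t
def C2413 (p q r t : ℕ) : Prop := r < p ∧ p < t ∧ t < q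
def C3412 (p q r t : ℕ) : Prop := r < t ∧ t < p ∧ p < q

theorem inv123 : CInv C123 := fun g P h a b c d ha hb hc hd => by simp [C123, h, ha, hc, hd]
theorem inv132 : CInv C132 := fun g P h a b c d ha hb hc hd => by simp [C132, h, ha, hc, hd]
theorem inv213 : CInv C213 := fun g P h a b c d ha hb hc hd => by simp [C213, h, ha, hc, hd]
theorem inv1423 : CInv C1423 := fun g P h a b c d ha hb hc hd => by simp [C1423, h, ha, hb, hc, hd]
theorem inv1234 : CInv C1234 := fun g P h a b c d ha hb hc hd => by simp [C1234, h, ha, hb, hc, hd]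
theorem inv1324 : CInv C1324 := fun g P h a b c d ha hb hc hd => by simp [C1324, h, ha, hb, hc, hd]
theorem inv2314 : CInv C2314 := fun g P h a b c d ha hb hc hd => by simp [C2314, h, ha, hb, hc, hd]
theorem inv2413 : CInv C2413 := fun g P h a b c d ha hb hc hd => by simp [C2413, h, ha, hb, hc, hd]
theorem inv3412 : CInv C3412 := fun g P h a b c d ha hb hc hd => by simp [C3412, h, ha, hb, hc, hd]

theorem isOcc_iff {k n : ℕ} (π : Equiv.Perm (Fin k)) (σ : Equiv.Perm (Fin n)) :
    IsOcc π σ ↔ ∃ f : Fin k → Fin n, StrictMono f ∧ StrictMono (fun i => σ (f (π.symm i))) := by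
  unfold IsOcc
  refine exists_congr fun f => and_congr_right fun _ => ?_
  constructor
  · intro h i j hij
    exact (h _ _).2 (by simpa using hij)
  · intro h a b
    have := h.lt_iff_lt (a := π a) (b := π b)
    simpa using this

theorem occ3 {n : ℕ} (π : Equiv.Perm (Fin 3)) (σ : Equiv.Perm (Fin n)) (e0 e1 e2 : Fin 3)
    (h0 : π e0 = 0) (h1 : π e1 = 1) (h2 : π e2 = 2) :
    IsOcc π σ ↔ ∃ a b c : Fin n, a < b ∧ b < c ∧ σ (![a, b, c] e0) < σ (![a, b, c] e1) ∧
      σ (![a, b, c] e1) < σ (![a, b, c] e2) := by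
  have s0 : π.symm 0 = e0 := by rw [Equiv.symm_apply_eq, h0]
  have s1 : π.symm 1 = e1 := by rw [Equiv.symm_apply_eq, h1]
  have s2 : π.symm 2 = e2 := by rw [Equiv.symm_apply_eq, h2]
  rw [isOcc_iff]
  simp only [Fin.strictMono_iff_lt_succ, Fin.forall_fin_two]
  simp only [Fin.castSucc_zero, Fin.succ_zero_eq_one, Fin.castSucc_one, Fin.succ_one_eq_two, s0, s1, s2]
  constructor
  · rintro ⟨f, ⟨f1, f2⟩, h⟩
    have hf : ![f 0, f 1, f 2] = f := by ext i; fin_cases i <;> rfl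
    refine ⟨f 0, f 1, f 2, f1, f2, ?_⟩
    rw [hf]; exact h
  · rintro ⟨a, b, c, h1, h2, h⟩
    exact ⟨![a, b, c], ⟨h1, h2⟩, h⟩

theorem occ4 {n : ℕ} (π : Equiv.Perm (Fin 4)) (σ : Equiv.Perm (Fin n)) (e0 e1 e2 e3 : Fin 4)
    (h0 : π e0 = 0) (h1 : π e1 = 1) (h2 : π e2 = 2) (h3 : π e3 = 3) :
    IsOcc π σ ↔ ∃ a b c d : Fin n, a < b ∧ b < c ∧ c < d ∧
      σ (![a, b, c, d] e0) < σ (![a, b, c, d] e1) ∧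
      σ (![a, b, c, d] e1) < σ (![a, b, c, d] e2) ∧ σ (![a, b, c, d] e2) < σ (![a, b, c, d] e3) := by
  have s0 : π.symm 0 = e0 := by rw [Equiv.symm_apply_eq, h0]
  have s1 : π.symm 1 = e1 := by rw [Equiv.symm_apply_eq, h1]
  have s2 : π.symm 2 = e2 := by rw [Equiv.symm_apply_eq, h2]
  have s3 : π.symm 3 = e3 := by rw [Equiv.symm_apply_eq, h3]
  rw [isOcc_iff]
  have key : ∀ (g : Fin 4 → Fin n), StrictMono g ↔ g 0 < g 1 ∧ g 1 < g 2 ∧ g 2 < g 3 := by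
    intro g
    rw [Fin.strictMono_iff_lt_succ]
    constructor
    · intro h; exact ⟨h 0, h 1, h 2⟩
    · rintro ⟨h0, h1, h2⟩ i
      fin_cases i
      · exact h0
      · exact h1
      · exact h2
  simp only [key, s0, s1, s2, s3]
  constructor
  · rintro ⟨f, ⟨f1, f2, f3⟩, h⟩
    have hf : ![f 0, f 1, f 2, f 3] = f := by ext i; fin_cases i <;> rfl
    refine ⟨f 0, f 1, f 2, f 3, f1, f2, f3, ?_⟩
    rw [hf]; exact h
  · rintro ⟨a, b, c, d, h1, h2, h3, h⟩
    exact ⟨![a, b, c, d], ⟨h1, h2, h3⟩, h⟩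

theorem av_pair (C : ℕ → ℕ → ℕ → ℕ → Prop) (π₁ π₂ : Equiv.Perm (Fin 4)) {n : ℕ}
    (σ : Equiv.Perm (Fin n)) (hne : ∀ a c d, ¬ C a a c d)
    (h1 : IsOcc π₁ σ ↔ ∃ a b c d : Fin n, a < b ∧ b < c ∧ c < d ∧ C (σ a) (σ b) (σ c) (σ d))
    (h2 : IsOcc π₂ σ ↔ ∃ a b c d : Fin n, a < b ∧ b < c ∧ c < d ∧ C (σ b) (σ a) (σ c) (σ d)) :
    AvPred {π₁, π₂} n σ ↔ ¬ hasC C σ := by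
  have : AvPred {π₁, π₂} n σ ↔ ¬ (IsOcc π₁ σ ∨ IsOcc π₂ σ) := by
    simp [AvPred, not_or]
  rw [this, not_iff_not, h1, h2]
  constructor
  · rintro (⟨a, b, c, d, i1, i2, i3, h⟩ | ⟨a, b, c, d, i1, i2, i3, h⟩)
    · exact ⟨a, b, c, d, i1.trans i2, i2, i3, h⟩
    · exact ⟨b, a, c, d, i2, i1.trans i2, i3, h⟩
  · rintro ⟨p, q, r, t, i1, i2, i3, h⟩
    rcases lt_trichotomy p q with hpq | rfl | hpq
    · exact Or.inl ⟨p, q, r, t, hpq, i2, i3, h⟩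
    · exact absurd h (hne _ _ _)
    · exact Or.inr ⟨q, p, r, t, hpq, i1, i3, h⟩

theorem av_one (C : ℕ → ℕ → ℕ → ℕ → Prop) (π : Equiv.Perm (Fin 3)) {n : ℕ}
    (σ : Equiv.Perm (Fin n)) (hq : ∀ a b b' c d, C a b c d → C a b' c d)
    (h1 : IsOcc π σ ↔ ∃ a c d : Fin n, a < c ∧ c < d ∧ C (σ a) (σ a) (σ c) (σ d)) :
    IsOcc π σ ↔ hasC C σ := by
  rw [h1]
  constructor
  · rintro ⟨a, c, d, i1, i2, h⟩
    exact ⟨a, a, c, d, i1, i1, i2, h⟩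
  · rintro ⟨p, q, r, t, i1, i2, i3, h⟩
    exact ⟨p, r, t, i1, i3, hq _ _ _ _ _ h⟩

theorem occ123 {n : ℕ} (σ : Equiv.Perm (Fin n)) : IsOcc p123 σ ↔ hasC C123 σ :=
  av_one _ _ _ (fun _ _ _ _ _ h => h) (occ3 p123 σ 0 1 2 rfl rfl rfl)
theorem occ132 {n : ℕ} (σ : Equiv.Perm (Fin n)) : IsOcc p132 σ ↔ hasC C132 σ :=
  av_one _ _ _ (fun _ _ _ _ _ h => h) (occ3 p132 σ 0 2 1 rfl rfl rfl)
theorem occ213 {n : ℕ} (σ : Equiv.Perm (Fin n)) : IsOcc p213 σ ↔ hasC C213 σ :=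
  av_one _ _ _ (fun _ _ _ _ _ h => h) (occ3 p213 σ 1 0 2 rfl rfl rfl)

theorem av1423 {n : ℕ} (σ : Equiv.Perm (Fin n)) : AvPred {p1423, p4123} n σ ↔ ¬ hasC C1423 σ :=
  av_pair _ _ _ _ (by unfold C1423; omega) (occ4 p1423 σ 0 2 3 1 rfl rfl rfl rfl)
    (occ4 p4123 σ 1 2 3 0 rfl rfl rfl rfl)
theorem av1234 {n : ℕ} (σ : Equiv.Perm (Fin n)) : AvPred {p1234, p2134} n σ ↔ ¬ hasC C1234 σ :=
  av_pair _ _ _ _ (by unfold C1234; omega) (occ4 p1234 σ 0 1 2 3 rfl rfl rfl rfl)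
    (occ4 p2134 σ 1 0 2 3 rfl rfl rfl rfl)
theorem av1324 {n : ℕ} (σ : Equiv.Perm (Fin n)) : AvPred {p1324, p3124} n σ ↔ ¬ hasC C1324 σ :=
  av_pair _ _ _ _ (by unfold C1324; omega) (occ4 p1324 σ 0 2 1 3 rfl rfl rfl rfl)
    (occ4 p3124 σ 1 2 0 3 rfl rfl rfl rfl)
theorem av2314 {n : ℕ} (σ : Equiv.Perm (Fin n)) : AvPred {p2314, p3214} n σ ↔ ¬ hasC C2314 σ :=
  av_pair _ _ _ _ (by unfold C2314; omega) (occ4 p2314 σ 2 0 1 3 rfl rfl rfl rfl)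
    (occ4 p3214 σ 2 1 0 3 rfl rfl rfl rfl)
theorem av2413 {n : ℕ} (σ : Equiv.Perm (Fin n)) : AvPred {p2413, p4213} n σ ↔ ¬ hasC C2413 σ :=
  av_pair _ _ _ _ (by unfold C2413; omega) (occ4 p2413 σ 2 0 3 1 rfl rfl rfl rfl)
    (occ4 p4213 σ 2 1 3 0 rfl rfl rfl rfl)
theorem av3412 {n : ℕ} (σ : Equiv.Perm (Fin n)) : AvPred {p3412, p4312} n σ ↔ ¬ hasC C3412 σ :=
  av_pair _ _ _ _ (by unfold C3412; omega) (occ4 p3412 σ 2 3 0 1 rfl rfl rfl rfl)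
    (occ4 p4312 σ 2 3 1 0 rfl rfl rfl rfl)
theorem av123 {n : ℕ} (σ : Equiv.Perm (Fin n)) : AvPred {p123} n σ ↔ ¬ hasC C123 σ := by
  rw [← occ123]; simp [AvPred]
theorem av132 {n : ℕ} (σ : Equiv.Perm (Fin n)) : AvPred {p132} n σ ↔ ¬ hasC C132 σ := by
  rw [← occ132]; simp [AvPred]


theorem pre_zero (m : ℕ) : pre m 0 = 0 := by simp [pre]

theorem pre_last (m n : ℕ) (h : m ≤ n) : pre m (n + 1) = n := by
  unfold pre; rw [if_neg (by omega)]; omega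

theorem ge_last (S : ℕ → Prop) (m m' n : ℕ) (hm : S m) (hmn : m ≤ n) (hn : S n)
    (hm' : S (pre m m')) :
    n + 1 ≤ m' ↔ Nat.count S (n + 1) ≤ Nat.count (fun x => S (pre m x)) m' := by
  have h1 : S (pre m (n + 1)) := by rw [pre_last m n hmn]; exact hn
  rw [← cpreN S m n hm hmn h1]
  exact cle (fun x => S (pre m x)) (n + 1) m' h1 hm'

noncomputable def gt123 : GT s123 (AvPred {p123}) :=
  mkGT s123 _ C123 inv123 (fun _ σ => av123 σ) (fun n m m' => m = 0 ∨ m' ≤ m)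
    (by
      intro n m m' hn hm hm'
      unfold C123
      constructor
      · rintro ⟨x, y, h⟩; omega
      · intro h; exact ⟨0, 0, by omega⟩)
    (by
      intro k j hk hj
      simp only [s123, mkSch, wCat]
      by_cases h : j = 0
      · exact ⟨0, by omega, by simp [h]⟩
      · exact ⟨k - j, by omega, by rw [if_neg (by omega)]; omega⟩)
    (by
      intro n σ m m' hn hm hm' h1 h2
      have h0 : siteC C123 n σ 0 := by
        rintro ⟨p, q, r, _, _, h⟩; unfold C123 at h; omega
      have a1 := c_zero _ h0 m
      have a2 := (le_pre _ m m' h1 h2).1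
      simp only [s123, mkSch]
      rw [← a1, ← a2])

noncomputable def gt132 : GT s132 (AvPred {p132}) :=
  mkGT s132 _ C132 inv132 (fun _ σ => av132 σ) (fun n m m' => m' = 0 ∨ m + 1 ≤ m')
    (by
      intro n m m' hn hm hm'
      unfold C132
      constructor
      · rintro ⟨x, y, h⟩; omega
      · intro h; exact ⟨0, 0, by omega⟩)
    (by
      intro k j hk hj
      simp only [s132, mkSch, wCat]
      exact ⟨j, by omega, rfl⟩)
    (by
      intro n σ m m' hn hm hm' h1 h2
      have h0 : siteC C132 n σ 0 := by
        rintro ⟨p, q, r, _, _, h⟩; unfold C132 at h; omega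
      have a1 := c_zero (fun x => siteC C132 n σ (pre m x)) (by rw [pre_zero]; exact h0) m'
      have a2 := (le_pre _ m m' h1 h2).1
      simp only [s132, mkSch]
      rw [← a1]
      omega)

noncomputable def gt1324 : GT s1324 (AvPred {p1324, p3124}) :=
  mkGT s1324 _ C1324 inv1324 (fun _ σ => av1324 σ) (fun n m m' => m = 0 ∨ m' ≤ m + 1)
    (by
      intro n m m' hn hm hm'
      unfold C1324
      constructor
      · rintro ⟨x, y, h⟩; omega
      · intro h; exact ⟨0, m + 1, by omega⟩)
    (by
      intro k j hk hj
      simp only [s1324, mkSch, wSch]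
      by_cases h : j = 0
      · exact ⟨0, by omega, by simp [h]⟩
      · exact ⟨k - j, by omega, by rw [if_neg (by omega)]; omega⟩)
    (by
      intro n σ m m' hn hm hm' h1 h2
      have h0 : siteC C1324 n σ 0 := by
        rintro ⟨p, q, r, _, _, h⟩; unfold C1324 at h; omega
      have a1 := c_zero _ h0 m
      have a2 := (le_pre _ m m' h1 h2).2
      simp only [s1324, mkSch]
      rw [← a1, ← a2])

theorem count_bd (S : ℕ → Prop) (m m' n : ℕ) (hm : S m) (hmn : m ≤ n) (hn : S n)
    (hm' : m' ≤ n + 1) :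
    Nat.count (fun x => S (pre m x)) m' ≤ Nat.count S (n + 1) := by
  have h1 : S (pre m (n + 1)) := by rw [pre_last m n hmn]; exact hn
  rw [← cpreN S m n hm hmn h1]
  exact Nat.count_monotone _ hm'

noncomputable def gt1423 : GT s1423 (AvPred {p1423, p4123}) :=
  mkGT s1423 _ C1423 inv1423 (fun _ σ => av1423 σ) (fun n m m' => m = 0 ∨ m' ≤ m ∨ m' = n + 1)
    (by
      intro n m m' hn hm hm'
      unfold C1423
      constructor
      · rintro ⟨x, y, h⟩; omega
      · intro h; exact ⟨0, m', by omega⟩)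
    (by
      intro k j hk hj
      simp only [s1423, mkSch, wSch]
      by_cases h : j = 0
      · exact ⟨0, by omega, by simp [h]⟩
      · exact ⟨k - j, by omega, by rw [if_neg (by omega)]; omega⟩)
    (by
      intro n σ m m' hn hm hm' h1 h2
      have h0 : siteC C1423 n σ 0 := by
        rintro ⟨p, q, r, _, _, h⟩; unfold C1423 at h; omega
      have hN : siteC C1423 n σ n := by
        rintro ⟨p, q, r, _, _, h⟩; unfold C1423 at h
        have := (σ q).isLt
        omega
      have a1 := c_zero _ h0 m
      have a2 := (le_pre _ m m' h1 h2).1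
      have a3 := ge_last _ m m' n h1 hm hN h2
      have a4 := count_bd _ m m' n h1 hm hN hm'
      simp only [s1423, mkSch]
      rw [← a1, ← a2]
      omega)

noncomputable def gt2413 : GT s2413 (AvPred {p2413, p4213}) :=
  mkGT s2413 _ C2413 inv2413 (fun _ σ => av2413 σ) (fun n m m' => m' ≤ m + 1 ∨ m' = n + 1)
    (by
      intro n m m' hn hm hm'
      unfold C2413
      constructor
      · rintro ⟨x, y, h⟩; omega
      · intro h; exact ⟨m + 1, m', by omega⟩)
    (by
      intro k j hk hj
      simp only [s2413, mkSch, wSch]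
      exact ⟨k - 1 - j, by omega, by omega⟩)
    (by
      intro n σ m m' hn hm hm' h1 h2
      have hN : siteC C2413 n σ n := by
        rintro ⟨p, q, r, _, _, h⟩; unfold C2413 at h
        have := (σ q).isLt
        omega
      have a2 := (le_pre _ m m' h1 h2).2
      have a3 := ge_last _ m m' n h1 hm hN h2
      have a4 := count_bd _ m m' n h1 hm hN hm'
      simp only [s2413, mkSch]
      rw [← a2]
      omega)

noncomputable def gt1234 : GT s1234 (AvPred {p1234, p2134}) :=
  mkGT s1234 _ C1234 inv1234 (fun _ σ => av1234 σ) (fun n m m' => m ≤ 1 ∨ m' ≤ m)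
    (by
      intro n m m' hn hm hm'
      unfold C1234
      constructor
      · rintro ⟨x, y, h⟩; omega
      · intro h; exact ⟨0, 1, by omega⟩)
    (by
      intro k j hk hj
      simp only [s1234, mkSch, wSch]
      by_cases h : j ≤ 1
      · exact ⟨j, by omega, by simp [h]⟩
      · exact ⟨k + 1 - j, by omega, by rw [if_neg (by omega)]; omega⟩)
    (by
      intro n σ m m' hn hm hm' h1 h2
      have h0 : siteC C1234 n σ 0 := by
        rintro ⟨p, q, r, _, _, h⟩; unfold C1234 at h; omega
      have h0' : siteC C1234 n σ 1 := by
        rintro ⟨p, q, r, _, _, h⟩; unfold C1234 at h; omega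
      have a1 := cle _ m 1 h1 h0'
      have e : Nat.count (siteC C1234 n σ) 1 = 1 := by
        rw [Nat.count_succ, if_pos h0]; simp
      rw [e] at a1
      have a2 := (le_pre _ m m' h1 h2).1
      simp only [s1234, mkSch]
      rw [← a1, ← a2])

noncomputable def gt3412 : GT s3412 (AvPred {p3412, p4312}) :=
  mkGT s3412 _ C3412 inv3412 (fun _ σ => av3412 σ) (fun n m m' => m' ≤ m ∨ n ≤ m')
    (by
      intro n m m' hn hm hm'
      unfold C3412
      constructor
      · rintro ⟨x, y, h⟩; omega
      · intro h; exact ⟨m', m' + 1, by omega⟩)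
    (by
      intro k j hk hj
      simp only [s3412, mkSch, wSch]
      exact ⟨k - 1 - j, by omega, by omega⟩)
    (by
      intro n σ m m' hn hm hm' h1 h2
      have hN : ∀ v, n - 1 ≤ v → siteC C3412 n σ v := by
        rintro v hv ⟨p, q, r, _, _, h⟩; unfold C3412 at h
        have := (σ q).isLt
        omega
      have b1 : siteC C3412 n σ (pre m n) := by
        apply hN; unfold pre; split_ifs <;> omega
      have b2 : siteC C3412 n σ (pre m (n + 1)) := by
        apply hN; unfold pre; split_ifs <;> omega
      have a2 := (le_pre _ m m' h1 h2).1
      have a3 := cle (fun x => siteC C3412 n σ (pre m x)) n m' b1 h2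
      have a4 := cpreN' _ m n h1 hm b2 b1
      simp only [s3412, mkSch]
      rw [← a2]
      omega)

noncomputable def gt2314 : GT s2314 (AvPred {p2314, p3214}) :=
  mkGT s2314 _ C2314 inv2314 (fun _ σ => av2314 σ) (fun n m m' => m' ≤ m + 2)
    (by
      intro n m m' hn hm hm'
      unfold C2314
      constructor
      · rintro ⟨x, y, h⟩; omega
      · intro h; exact ⟨m + 1, m + 2, by omega⟩)
    (by
      intro k j hk hj
      simp only [s2314, mkSch, wSch]
      exact ⟨k - 1 - j, by omega, by omega⟩)
    (by
      intro n σ m m' hn hm hm' h1 h2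
      have down : ∀ u v, u ≤ v → siteC C2314 n σ v → siteC C2314 n σ u := by
        rintro u v huv hv ⟨p, q, r, i1, i2, h⟩
        refine hv ⟨p, q, r, i1, i2, ?_⟩
        unfold C2314 at *; omega
      have a2 := (le_pre _ m m' h1 h2).2
      have e : Nat.count (fun x => siteC C2314 n σ (pre m x)) (m + 2) =
          Nat.count (siteC C2314 n σ) m + 2 := by
        rw [Nat.count_succ, if_pos (by rw [pre_succ]; exact h1), cpre1 _ _ h1]
      simp only [s2314, mkSch]
      by_cases h : siteC C2314 n σ (m + 1)
      · rw [← e]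
        exact cle (fun x => siteC C2314 n σ (pre m x)) m' (m + 2) h2
          (by unfold pre; rw [if_neg (by omega)]; exact h)
      · have : m' ≤ m + 1 := by
          by_contra hc
          apply h
          refine down _ _ ?_ h2
          unfold pre; rw [if_neg (by omega)]; omega
        omega)


def DC (P : ℕ → Prop) {n : ℕ} (σ : Equiv.Perm (Fin n)) : Prop :=
  ∀ (i : ℕ) (hi : i + 1 < n), σ ⟨i + 1, hi⟩ < σ ⟨i, by omega⟩ →
    P ((Finset.univ.filter fun j : Fin n =>
      (j : ℕ) < i ∧ σ ⟨i + 1, hi⟩ < σ j ∧ σ j < σ ⟨i, by omega⟩).card)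

theorem dcA {n : ℕ} (σ : Equiv.Perm (Fin n)) : DescentCondA σ ↔ DC (fun c => 0 < c) σ := by
  unfold DescentCondA DC
  refine forall_congr' fun i => forall_congr' fun hi => imp_congr_right fun _ => ?_
  show _ ↔ 0 < _
  rw [Finset.card_pos]
  constructor
  · rintro ⟨j, hj⟩; exact ⟨j, by simpa using hj⟩
  · rintro ⟨j, hj⟩; exact ⟨j, by simpa using hj⟩

theorem app_lt {n : ℕ} (σ : Equiv.Perm (Fin n)) (m : Fin (n + 1)) (i j : Fin n) :
    app σ m i.castSucc < app σ m j.castSucc ↔ σ i < σ j := by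
  rw [Fin.lt_def, Fin.lt_def, app_fm, app_fm]
  unfold fm
  split_ifs <;> omega

theorem DC_app (P : ℕ → Prop) {n : ℕ} (σ : Equiv.Perm (Fin (n + 1))) (m : Fin (n + 2)) :
    DC P (app σ m) ↔ DC P σ ∧
      ((m : ℕ) ≤ σ (Fin.last n) → P ((σ (Fin.last n) : ℕ) - m)) := by
  have h1 : ∀ (i : ℕ) (hi : i + 1 < n + 1),
      ((Finset.univ.filter fun j : Fin (n + 2) => (j : ℕ) < i ∧
        app σ m ⟨i + 1, by omega⟩ < app σ m j ∧ app σ m j < app σ m ⟨i, by omega⟩).card) =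
      ((Finset.univ.filter fun j : Fin (n + 1) => (j : ℕ) < i ∧
        σ ⟨i + 1, hi⟩ < σ j ∧ σ j < σ ⟨i, by omega⟩).card) := by
    intro i hi
    refine Eq.trans ?_ (Finset.card_map Fin.castSuccEmb)
    congr 1
    ext j
    simp only [Finset.mem_filter, Finset.mem_map, Finset.mem_univ, true_and]
    constructor
    · rintro ⟨a1, a2, a3⟩
      induction j using Fin.lastCases with
      | last => simp at a1; omega
      | cast j =>
        refine ⟨j, ⟨a1, ?_, ?_⟩, rfl⟩
        · exact (app_lt σ m ⟨i + 1, hi⟩ j).1 a2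
        · exact (app_lt σ m j ⟨i, by omega⟩).1 a3
    · rintro ⟨j, ⟨a1, a2, a3⟩, rfl⟩
      exact ⟨a1, (app_lt σ m ⟨i + 1, hi⟩ j).2 a2, (app_lt σ m j ⟨i, by omega⟩).2 a3⟩
  have e0 : app σ m ⟨n + 1, by omega⟩ = m := app_last σ m
  have e1 : (app σ m ⟨n, by omega⟩ : ℕ) = fm m (σ (Fin.last n)) := app_fm σ m (Fin.last n)
  have h2 : (m : ℕ) ≤ σ (Fin.last n) →
      ((Finset.univ.filter fun j : Fin (n + 2) => (j : ℕ) < n ∧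
        app σ m ⟨n + 1, by omega⟩ < app σ m j ∧ app σ m j < app σ m ⟨n, by omega⟩).card) =
      (σ (Fin.last n) : ℕ) - m := by
    intro hm
    have hl := (σ (Fin.last n)).isLt
    have e1' : (app σ m ⟨n, by omega⟩ : ℕ) = (σ (Fin.last n) : ℕ) + 1 := by
      rw [e1]; unfold fm; rw [if_neg (by omega)]
    have : (Finset.univ.filter fun j : Fin (n + 2) => (j : ℕ) < n ∧
        app σ m ⟨n + 1, by omega⟩ < app σ m j ∧ app σ m j < app σ m ⟨n, by omega⟩) =
        (Finset.Ioo m (app σ m ⟨n, by omega⟩)).map (app σ m).symm.toEmbedding := by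
      ext j
      simp only [Finset.mem_filter, Finset.mem_map_equiv, Finset.mem_univ, true_and,
        Equiv.symm_symm, Finset.mem_Ioo, e0]
      constructor
      · exact fun h => h.2
      · intro h
        refine ⟨?_, h⟩
        by_contra hc
        have hj := j.isLt
        rcases (show (j : ℕ) = n ∨ (j : ℕ) = n + 1 by omega) with h' | h'
        · have : j = ⟨n, by omega⟩ := Fin.ext h'
          rw [this] at h
          exact lt_irrefl _ h.2
        · have : j = ⟨n + 1, by omega⟩ := Fin.ext h'
          rw [this, e0] at h
          exact lt_irrefl _ h.1
    rw [this, Finset.card_map, Fin.card_Ioo, e1']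
    omega
  have h3 : app σ m ⟨n + 1, by omega⟩ < app σ m ⟨n, by omega⟩ ↔ (m : ℕ) ≤ σ (Fin.last n) := by
    rw [e0, Fin.lt_def, e1]
    unfold fm
    split_ifs <;> omega
  constructor
  · intro h
    refine ⟨?_, ?_⟩
    · intro i hi hd
      rw [← h1 i hi]
      exact h i (by omega) ((app_lt σ m ⟨i + 1, hi⟩ ⟨i, by omega⟩).2 hd)
    · intro hm
      rw [← h2 hm]
      exact h n (by omega) (h3.2 hm)
  · rintro ⟨ha, hb⟩ i hi hd
    rcases Nat.lt_or_ge (i + 1) (n + 1) with hi' | hi'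
    · rw [h1 i hi']
      exact ha i hi' ((app_lt σ m ⟨i + 1, hi'⟩ ⟨i, by omega⟩).1 hd)
    · obtain rfl : i = n := by omega
      rw [h2 (h3.1 hd)]
      exact hb (h3.1 hd)

theorem site213 {n : ℕ} (σ : Equiv.Perm (Fin (n + 1))) (h : ¬ hasC C213 σ) (m : ℕ)
    (hm : m ≤ n + 1) : siteC C213 (n + 1) σ m ↔ m ≤ (σ (Fin.last n) : ℕ) + 1 := by
  constructor
  · intro hs
    by_contra hc
    have hlt : (σ (Fin.last n) : ℕ) + 1 < n + 1 := by omega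
    apply hs
    have hv : (σ (σ.symm ⟨_, hlt⟩) : ℕ) = (σ (Fin.last n) : ℕ) + 1 := by simp
    have hne : σ.symm ⟨_, hlt⟩ < Fin.last n := by
      rw [Fin.lt_last_iff_ne_last]
      intro h'
      rw [h'] at hv
      omega
    refine ⟨_, _, Fin.last n, hne, hne, ?_⟩
    unfold C213
    omega
  · rintro hle ⟨p, q, r, h1, h2, hc⟩
    unfold C213 at hc
    by_cases hr : r = Fin.last n
    · subst hr; omega
    · have hrl : r < Fin.last n := Fin.lt_last_iff_ne_last.2 hr
      refine h ⟨p, q, r, Fin.last n, h1, h2, hrl, ?_⟩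
      have : (σ p : ℕ) ≠ σ (Fin.last n) := by
        intro h'
        have := σ.injective (Fin.ext h')
        omega
      unfold C213
      omega

theorem count_le (S : ℕ → Prop) (l N : ℕ) (h : ∀ m, m ≤ N → (S m ↔ m ≤ l)) (m : ℕ)
    (hm : m ≤ N + 1) : Nat.count S m = min m (l + 1) := by
  induction m with
  | zero => simp
  | succ m ih =>
    rw [Nat.count_succ, ih (by omega)]
    by_cases hS : S m
    · have := (h m (by omega)).1 hS
      rw [if_pos hS]; omega
    · have : ¬ m ≤ l := fun h' => hS ((h m (by omega)).2 h')
      rw [if_neg hS]; omega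

noncomputable def mkGT2 (s : Sch) (P : ℕ → Prop) (F : ∀ n, Equiv.Perm (Fin n) → Prop)
    (hFP : ∀ n (σ : Equiv.Perm (Fin n)), F n σ ↔ ¬ hasC C213 σ ∧ DC P σ)
    (hR : ∀ k j i, s.R k j i ↔ i ≤ j + 1)
    (hP : ∀ l m, m ≤ l + 1 → ((m ≤ l → P (l - m)) ↔
      ∃ a, s.kmin + s.d a ≤ l + 2 + 1 ∧ s.dec (l + 2) a = m)) : GT s F where
  Site := siteC C213
  F1 := fun σ => by
    rw [hFP]
    refine ⟨?_, ?_⟩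
    · rintro ⟨p, q, r, t, h1, h2, h3, h⟩
      omega
    · intro i hi
      omega
  S10 := fun σ => by
    rintro ⟨p, q, r, h1, h2, h⟩
    omega
  S11 := fun σ => by
    rintro ⟨p, q, r, h1, h2, h⟩
    omega
  hFp := fun n σ m h => by
    rw [hFP] at *
    rw [hasC_app inv213, DC_app] at h
    exact ⟨fun h' => h.1 (Or.inl h'), h.2.1⟩
  hFS := fun n σ m h hk => by
    rw [hFP] at *
    have hm := m.isLt
    have hl := (σ (Fin.last n)).isLt
    rw [hasC_app inv213, DC_app]
    have hs := site213 σ h.1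
    have c1 := count_le _ _ (n + 1) hs (n + 2) (by omega)
    have c2 := count_le _ _ (n + 1) hs m (by omega)
    rw [show min (n + 2) ((σ (Fin.last n) : ℕ) + 1 + 1) = (σ (Fin.last n) : ℕ) + 2 by omega] at c1
    rw [c1, c2]
    have key : siteC C213 (n + 1) σ m →
        (((m : ℕ) ≤ σ (Fin.last n) → P ((σ (Fin.last n) : ℕ) - m)) ↔
        ∃ a, s.ok ((σ (Fin.last n) : ℕ) + 2) a ∧ s.dec ((σ (Fin.last n) : ℕ) + 2) a =
          min (m : ℕ) ((σ (Fin.last n) : ℕ) + 1 + 1)) := by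
      intro h'
      have hle := (hs m (by omega)).1 h'
      rw [show min (m : ℕ) ((σ (Fin.last n) : ℕ) + 1 + 1) = m by omega]
      exact hP _ _ hle
    constructor
    · rintro ⟨h1, _, h3⟩
      have h4 : siteC C213 (n + 1) σ m := by
        by_contra hc
        exact h1 (Or.inr hc)
      exact ⟨h4, (key h4).1 h3⟩
    · rintro ⟨h4, h5⟩
      refine ⟨?_, h.2, (key h4).2 h5⟩
      rintro (h6 | h6)
      · exact h.1 h6
      · exact h6 h4
  hS := fun n σ m h hk hs m' hm' => by
    rw [siteC_app inv213]
    have hm := m.isLt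
    apply and_congr_right
    intro hp
    rw [hR, ← (le_pre _ (m : ℕ) m' hs hp).2]
    unfold C213
    constructor
    · intro h'
      by_contra hc
      exact h' ⟨m + 1, m + 1, by omega⟩
    · rintro h' ⟨x, y, hh⟩
      omega

noncomputable def gtA : GT sA FamAPred :=
  mkGT2 sA (fun c => 0 < c) _
    (fun n σ => by rw [← dcA, ← occ213]; rfl)
    (fun k j i => by simp only [sA, mkSch])
    (fun l m hm => by
      simp only [sA, mkSch, wMot]
      constructor
      · intro h
        by_cases hml : m ≤ l
        · have := h hml
          refine ⟨l - m, ?_, ?_⟩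
          · rw [if_neg (by omega)]; omega
          · rw [if_neg (by omega)]; omega
        · exact ⟨0, by simp, by simp; omega⟩
      · rintro ⟨a, h1, h2⟩ hml
        split_ifs at h1 h2 <;> omega)

noncomputable def gtB : GT sB FamBPred :=
  mkGT2 sB (fun c => Odd c) _
    (fun n σ => by rw [← occ213]; rfl)
    (fun k j i => by simp only [sB, mkSch])
    (fun l m hm => by
      simp only [sB, mkSch, wOdd]
      constructor
      · intro h
        by_cases hml : m ≤ l
        · obtain ⟨c, hc⟩ := h hml
          exact ⟨c + 1, by omega, by omega⟩
        · exact ⟨0, by omega, by omega⟩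
      · rintro ⟨a, h1, h2⟩ hml
        exact ⟨a - 1, by omega⟩)


/-- For `C` any one of the ten listed families and `σ_n` uniform on the permutations of size `n`
in `C`, there are constants `Λ_π ∈ [0,1]` such that `c-occ(π,σ_n)/n → Λ_π` in probability for
every pattern `π`. -/
theorem stmt13 (F : ∀ n, Equiv.Perm (Fin n) → Prop)
    (hF : F = AvPred {p123} ∨ F = AvPred {p132} ∨ F = AvPred {p1423, p4123} ∨
      F = AvPred {p1234, p2134} ∨ F = AvPred {p1324, p3124} ∨ F = AvPred {p2314, p3214} ∨
      F = AvPred {p2413, p4213} ∨ F = AvPred {p3412, p4312} ∨ F = FamAPred ∨ F = FamBPred) :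
    ∃ Λ : ∀ k : ℕ, Equiv.Perm (Fin k) → ℝ,
      (∀ (k : ℕ) (π : Equiv.Perm (Fin k)), 0 ≤ Λ k π ∧ Λ k π ≤ 1) ∧
      ∀ (k : ℕ) (π : Equiv.Perm (Fin k)) (ε : ℝ), 0 < ε →
        Filter.Tendsto
          (fun n : ℕ =>
            ((((Finset.univ.filter fun σ : Equiv.Perm (Fin n) => F n σ).filter
                fun σ => ε ≤ |(cOcc π σ : ℝ) / (n : ℝ) - Λ k π|).card : ℝ) /
              (((Finset.univ.filter fun σ : Equiv.Perm (Fin n) => F n σ).card : ℝ))))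
          Filter.atTop (nhds 0) := by
  rcases hF with rfl | rfl | rfl | rfl | rfl | rfl | rfl | rfl | rfl | rfl
  · exact gt123.final rfl
  · exact gt132.final rfl
  · exact gt1423.final rfl
  · exact gt1234.final rfl
  · exact gt1324.final rfl
  · exact gt2314.final rfl
  · exact gt2413.final rfl
  · exact gt3412.final rfl
  · exact gtA.final rfl
  · exact gtB.final rfl
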